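/- arXiv:1601.05480 — 10 statements merged into one kernel-verified Lean document; each statement's English description precedes it below -/
import Mathlib

section
/- Let c ∈ ℝ and let f_1,…,f_n : ℝ → ℝ be monotone nondecreasing functions, and set f̄_i(x) = max{f_i(x), x}. Then the maximum over all permutations σ of [n] and integers 0 ≤ k ≤ n of f_{σ(k)}∘⋯∘f_{σ(1)}(c) equals the maximum over all permutations σ of [n] of f̄_{σ(n)}∘⋯∘f̄_{σ(1)}(c). Moreover, if a permutation σ and an integer k with 0 ≤ k ≤ n maximize f_{σ(k)}∘⋯∘f_{σ(1)}(c) over all such pairs, then σ maximizes f̄_{σ(n)}∘⋯∘f̄_{σ(1)}(c) over all permutations of [n]. -/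
/-!
Composing the `f̄ i = f i ⊔ id` along a list `L` gives the greatest value among the compositions of
the `f i` along sublists of `L`: it is an upper bound because each `f̄ i` is monotone and dominates
both `f i` and the identity, and it is attained because `f̄ i` acts, at the point where it is
evaluated, either as `f i` or as the identity. A prefix of an enumeration is a sublist of it, and
conversely a sublist of an enumeration is a prefix of another one. So the partial and the total
problem have the same optimum, and the total value along `σ` dominates every partial value along
`σ`.
-/

/-- `compSeq f σ k c = f (σ k) ∘ ⋯ ∘ f (σ 1) (c)` (0-indexed: applies `f (σ 0)` first). -/
def compSeq {n : ℕ} (f : Fin n → ℝ → ℝ) (σ : Fin n → Fin n) (k : ℕ) (c : ℝ) : ℝ :=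
  (((List.finRange n).take k).map σ).foldl (fun x i => f i x) c

section Foldl

variable {ι α : Type*} {f : ι → α → α}

lemma foldl_le_foldl_sup_id_of_sublist [SemilatticeSup α] (hf : ∀ i, Monotone (f i ⊔ id))
    {S L : List ι} (hSL : S.Sublist L) {x y : α} (hxy : x ≤ y) :
    S.foldl (fun z i => f i z) x ≤ L.foldl (fun z i => (f i ⊔ id) z) y := by
  induction hSL generalizing x y with
  | slnil => exact hxy
  | cons i _ ih => exact ih (hxy.trans le_sup_right)
  | cons_cons i _ ih => exact ih (le_sup_left.trans (hf i hxy))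

lemma exists_sublist_foldl_sup_id_eq [LinearOrder α] (f : ι → α → α) (L : List ι) (x : α) :
    ∃ S : List ι, S.Sublist L ∧
      L.foldl (fun z i => (f i ⊔ id) z) x = S.foldl (fun z i => f i z) x := by
  induction L generalizing x with
  | nil => exact ⟨[], .slnil, rfl⟩
  | cons i L ih =>
    obtain ⟨S, hSL, hS⟩ := ih ((f i ⊔ id) x)
    rcases le_total x (f i x) with hx | hx
    · have hfi : (f i ⊔ id) x = f i x := sup_eq_left.2 hx
      exact ⟨i :: S, hSL.cons_cons i, by rw [List.foldl_cons, List.foldl_cons, hS, hfi]⟩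
    · have hfi : (f i ⊔ id) x = x := sup_eq_right.2 hx
      exact ⟨S, hSL.cons i, by rw [List.foldl_cons, hS, hfi]⟩

end Foldl

section Enumeration

variable {ι : Type*}

lemma exists_equiv_map_finRange_eq {n : ℕ} {L : List ι} (hlen : L.length = n) (hL : L.Nodup)
    (hmem : ∀ i, i ∈ L) : ∃ σ : Fin n ≃ ι, (List.finRange n).map σ = L := by
  classical
  subst hlen
  exact ⟨hL.getEquivOfForallMemList L hmem, List.map_get_finRange L⟩

lemma exists_equiv_map_take_finRange_eq_of_sublist {n : ℕ} (τ : Fin n ≃ ι) {S : List ι}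
    (hS : S.Sublist ((List.finRange n).map τ)) :
    ∃ σ : Fin n ≃ ι, ∃ k ≤ n, ((List.finRange n).take k).map σ = S := by
  obtain ⟨R, hR⟩ := hS.exists_perm_append
  have hlen : (S ++ R).length = n := by simpa using hR.length_eq.symm
  have hnodup : (S ++ R).Nodup := hR.nodup_iff.1 ((List.nodup_finRange n).map τ.injective)
  have hmem (i : ι) : i ∈ S ++ R :=
    hR.mem_iff.1 (List.mem_map.2 ⟨τ.symm i, List.mem_finRange _, τ.apply_symm_apply i⟩)
  obtain ⟨σ, hσ⟩ := exists_equiv_map_finRange_eq hlen hnodup hmem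
  refine ⟨σ, S.length, by simpa using hS.length_le, ?_⟩
  rw [List.map_take, hσ, List.take_left]

end Enumeration

section PartialComp

variable {ι α : Type*} {n : ℕ}

/-- The partial composition `f (σ (k - 1)) ∘ ⋯ ∘ f (σ 0)` evaluated at `c`; this is `compSeq` for
self-maps of an arbitrary type, with an arbitrary index type enumerated by `σ`. For `k > n` all `n`
maps are applied. -/
def partialComp (f : ι → α → α) (σ : Fin n → ι) (k : ℕ) (c : α) : α :=
  (((List.finRange n).take k).map σ).foldl (fun x i => f i x) c

lemma partialComp_eq_foldl (f : ι → α → α) (σ : Fin n → ι) (c : α) :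
    partialComp f σ n c = ((List.finRange n).map σ).foldl (fun x i => f i x) c := by
  rw [partialComp, List.take_of_length_le List.length_finRange.le]

lemma partialComp_le_partialComp_sup_id [SemilatticeSup α] {f : ι → α → α}
    (hf : ∀ i, Monotone (f i ⊔ id)) (σ : Fin n → ι) (k : ℕ) (c : α) :
    partialComp f σ k c ≤ partialComp (fun i => f i ⊔ id) σ n c := by
  rw [partialComp_eq_foldl]
  exact foldl_le_foldl_sup_id_of_sublist hf ((List.take_sublist k _).map σ) le_rfl

lemma exists_partialComp_sup_id_eq [LinearOrder α] (f : ι → α → α) (τ : Fin n ≃ ι) (c : α) :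
    ∃ σ : Fin n ≃ ι, ∃ k ≤ n,
      partialComp (fun i => f i ⊔ id) τ n c = partialComp f σ k c := by
  obtain ⟨S, hSτ, hS⟩ := exists_sublist_foldl_sup_id_eq f ((List.finRange n).map τ) c
  obtain ⟨σ, k, hk, hσ⟩ := exists_equiv_map_take_finRange_eq_of_sublist τ hSτ
  exact ⟨σ, k, hk, by rw [partialComp_eq_foldl, hS, partialComp, hσ]⟩

theorem stmt1_general [LinearOrder α] (c : α) (f : ι → α → α)
    (hf : ∀ i, Monotone (f i ⊔ id)) :
    (∀ (σ : Fin n ≃ ι) (k : ℕ), k ≤ n →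
      ∃ τ : Fin n ≃ ι, partialComp f σ k c ≤ partialComp (fun i => f i ⊔ id) τ n c) ∧
    (∀ τ : Fin n ≃ ι, ∃ (σ : Fin n ≃ ι) (k : ℕ), k ≤ n ∧
      partialComp (fun i => f i ⊔ id) τ n c ≤ partialComp f σ k c) ∧
    (∀ (σ : Fin n ≃ ι) (k : ℕ), k ≤ n →
      (∀ (τ : Fin n ≃ ι) (l : ℕ), l ≤ n → partialComp f τ l c ≤ partialComp f σ k c) →
      ∀ τ : Fin n ≃ ι,
        partialComp (fun i => f i ⊔ id) τ n c ≤ partialComp (fun i => f i ⊔ id) σ n c) := by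
  refine ⟨fun σ k _ => ⟨σ, partialComp_le_partialComp_sup_id hf σ k c⟩, fun τ => ?_,
    fun σ k _ hmax τ => ?_⟩
  · obtain ⟨σ, k, hk, hτ⟩ := exists_partialComp_sup_id_eq f τ c
    exact ⟨σ, k, hk, hτ.le⟩
  · obtain ⟨ρ, l, hl, hτ⟩ := exists_partialComp_sup_id_eq f τ c
    calc partialComp (fun i => f i ⊔ id) τ n c
      _ = partialComp f ρ l c := hτ
      _ ≤ partialComp f σ k c := hmax ρ l hl
      _ ≤ partialComp (fun i => f i ⊔ id) σ n c := partialComp_le_partialComp_sup_id hf σ k c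

end PartialComp

/-- The maximum of the partial composition ordering problem for monotone nondecreasing
`f i` equals the maximum of the total composition ordering problem for
`f̄ i = max (f i x) x`; moreover any maximizer `(σ, k)` of the former yields a
maximizer `σ` of the latter. -/
theorem stmt1 (n : ℕ) (c : ℝ) (f : Fin n → ℝ → ℝ) (hmono : ∀ i, Monotone (f i)) :
    (∀ (σ : Equiv.Perm (Fin n)) (k : ℕ), k ≤ n →
      ∃ τ : Equiv.Perm (Fin n),
        compSeq f σ k c ≤ compSeq (fun i x => max (f i x) x) τ n c) ∧
    (∀ τ : Equiv.Perm (Fin n), ∃ (σ : Equiv.Perm (Fin n)) (k : ℕ), k ≤ n ∧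
        compSeq (fun i x => max (f i x) x) τ n c ≤ compSeq f σ k c) ∧
    (∀ (σ : Equiv.Perm (Fin n)) (k : ℕ), k ≤ n →
      (∀ (τ : Equiv.Perm (Fin n)) (l : ℕ), l ≤ n → compSeq f τ l c ≤ compSeq f σ k c) →
      ∀ τ : Equiv.Perm (Fin n),
        compSeq (fun i x => max (f i x) x) τ n c ≤
          compSeq (fun i x => max (f i x) x) σ n c) :=
  stmt1_general c f fun i => (hmono i).sup monotone_id
end

section
/- Let c ∈ ℝ and let f_1,…,f_n : ℝ → ℝ be monotone nondecreasing functions. If a permutation σ of [n] satisfies that i ≤ j implies f_{σ(i)} ≼ f_{σ(j)} for all i, j ∈ [n], then σ is optimal for the maximum total composition ordering problem ((f_i)_{i∈[n]}, c): for every permutation τ of [n], f_{σ(n)}∘⋯∘f_{σ(1)}(c) ≥ f_{τ(n)}∘⋯∘f_{τ(1)}(c). -/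
/-- `f ≼ g` iff `f ∘ g ≤ g ∘ f` pointwise. -/
def Preceq (f g : ℝ → ℝ) : Prop := ∀ x : ℝ, f (g x) ≤ g (f x)

section Foldl

variable {α β : Type*} [Preorder α] {f : α → β → α}

lemma apply_foldl_le_foldl_apply (hf : ∀ b, Monotone (f · b)) {a : β} {l : List β}
    (hl : ∀ b ∈ l, ∀ x, f (f x b) a ≤ f (f x a) b) (x : α) :
    f (l.foldl f x) a ≤ l.foldl f (f x a) := by
  induction l generalizing x with
  | nil => exact le_rfl
  | cons b t ih =>
    rw [List.forall_mem_cons] at hl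
    calc f (t.foldl f (f x b)) a
        ≤ t.foldl f (f (f x b) a) := ih hl.2 (f x b)
      _ ≤ t.foldl f (f (f x a) b) := List.foldl_monotone hf t (hl.1 x)

lemma foldl_append_cons_le_foldl_cons_append (hf : ∀ b, Monotone (f · b)) {a : β} {l₁ : List β}
    (hl₁ : ∀ b ∈ l₁, ∀ x, f (f x b) a ≤ f (f x a) b) (l₂ : List β) (x : α) :
    (l₁ ++ a :: l₂).foldl f x ≤ (a :: (l₁ ++ l₂)).foldl f x := by
  simpa only [List.foldl_append, List.foldl_cons] using
    List.foldl_monotone hf l₂ (apply_foldl_le_foldl_apply hf hl₁ x)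

theorem foldl_le_foldl_of_perm_of_pairwise (hf : ∀ b, Monotone (f · b)) {l l' : List β}
    (hperm : l'.Perm l) (hl : l.Pairwise fun a b => ∀ x, f (f x b) a ≤ f (f x a) b) (x : α) :
    l'.foldl f x ≤ l.foldl f x := by
  induction l generalizing l' x with
  | nil => rw [hperm.eq_nil]
  | cons a t ih =>
    obtain ⟨ha, ht⟩ := List.pairwise_cons.1 hl
    obtain ⟨l₁, l₂, rfl⟩ := List.append_of_mem (hperm.mem_iff.2 List.mem_cons_self)
    have hrest : (l₁ ++ l₂).Perm t := (List.perm_middle.symm.trans hperm).cons_inv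
    have hbefore : ∀ b ∈ l₁, ∀ x, f (f x b) a ≤ f (f x a) b := fun b hb =>
      ha b (hrest.subset (List.mem_append_left l₂ hb))
    calc (l₁ ++ a :: l₂).foldl f x
        ≤ (a :: (l₁ ++ l₂)).foldl f x := foldl_append_cons_le_foldl_cons_append hf hbefore l₂ x
      _ ≤ (a :: t).foldl f x := ih hrest ht (f x a)

end Foldl

lemma compSeq_eq_foldl {n : ℕ} (f : Fin n → ℝ → ℝ) (σ : Fin n → Fin n) (c : ℝ) :
    compSeq f σ n c = Fin.foldl n (fun x i => f (σ i) x) c := by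
  rw [compSeq, List.take_of_length_le List.length_finRange.le, List.foldl_map,
    Fin.foldl_eq_foldl_finRange]

theorem stmt4_general {α : Type*} [Preorder α] {n : ℕ} (c : α) {f : Fin n → α → α}
    (hmono : ∀ i, Monotone (f i)) (σ : Equiv.Perm (Fin n))
    (hord : ∀ i j : Fin n, i < j → f (σ i) ∘ f (σ j) ≤ f (σ j) ∘ f (σ i))
    (τ : Equiv.Perm (Fin n)) :
    Fin.foldl n (fun x i => f (τ i) x) c ≤ Fin.foldl n (fun x i => f (σ i) x) c := by
  have hperm : ((List.finRange n).map τ).Perm ((List.finRange n).map σ) :=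
    τ.map_finRange_perm.trans σ.map_finRange_perm.symm
  have hsorted : ((List.finRange n).map σ).Pairwise fun i j => f i ∘ f j ≤ f j ∘ f i :=
    List.pairwise_map.2 ((List.pairwise_lt_finRange n).imp (hord _ _))
  simpa only [Fin.foldl_eq_foldl_finRange, List.foldl_map] using
    foldl_le_foldl_of_perm_of_pairwise (f := fun x i => f i x) hmono hperm hsorted c

/-- If a permutation `σ` sorts the monotone nondecreasing functions `f i` so that
`i ≤ j → f (σ i) ≼ f (σ j)`, then `σ` is optimal for the maximum total composition
ordering problem `((f i)_i, c)`. -/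
theorem stmt4 (n : ℕ) (c : ℝ) (f : Fin n → ℝ → ℝ) (hmono : ∀ i, Monotone (f i))
    (σ : Equiv.Perm (Fin n))
    (hord : ∀ i j : Fin n, i ≤ j → Preceq (f (σ i)) (f (σ j))) :
    ∀ τ : Equiv.Perm (Fin n), compSeq f τ n c ≤ compSeq f σ n c := by
  simpa only [compSeq_eq_foldl] using
    stmt4_general c hmono σ fun i j hij => hord i j hij.le
end

section
/- Let f_i(x) = a_i x + b_i and f_j(x) = a_j x + b_j be monotone nondecreasing linear functions that are not the identity (a_i, a_j ≥ 0 and (a_i, b_i), (a_j, b_j) ≠ (1, 0)). Then: (a) if a_i = a_j = 1, then f_i ≃ f_j; (b) if a_i, a_j ≥ 1 and a_i·a_j > 1, then f_i ≼ f_j if and only if γ(f_i) ≤ γ(f_j); (c) if a_i, a_j < 1, then f_i ≼ f_j if and only if γ(f_i) ≤ γ(f_j); (d) if a_i ≥ 1 and a_j < 1, then f_i ≼ f_j if and only if γ(f_i) ≥ γ(f_j), and f_j ≼ f_i if and only if γ(f_i) ≤ γ(f_j). -/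
/-- `γ` of the linear function `x ↦ a x + b`: the fixed point `b / (1 - a)` if `a ≠ 1`,
`+∞` if `a = 1` and `b < 0`, `-∞` if `a = 1` and `b ≥ 0`. -/
noncomputable def gam (a b : ℝ) : EReal :=
  if a = 1 then (if b < 0 then (⊤ : EReal) else (⊥ : EReal))
  else ((b / (1 - a) : ℝ) : EReal)

/-!
For linear `f` and `g` the difference `f ∘ g - g ∘ f` is constant, so `f ≼ g` can be tested at a
single point.  At a fixed point `p` of `g` the condition reads `f p ≤ g (f p)`, which says on which
side of `p` the point `f p` lies; this in turn says on which side of `γ f` the point `p = γ g` lies.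
The infinite values of `γ` are exactly what makes the last translation valid for translations `f`.
-/

theorem preceq_linear_iff_apply (a b c d x : ℝ) :
    Preceq (fun x => a * x + b) (fun x => c * x + d) ↔
      a * (c * x + d) + b ≤ c * (a * x + b) + d :=
  ⟨fun h => h x, fun h y => by linear_combination h⟩

section FixedPoint

variable {c d p : ℝ}

theorem preceq_linear_iff_of_right_fixed (a b : ℝ) (hp : c * p + d = p) :
    Preceq (fun x => a * x + b) (fun x => c * x + d) ↔
      a * p + b ≤ c * (a * p + b) + d := by
  rw [preceq_linear_iff_apply a b c d p, hp]

theorem preceq_linear_iff_of_left_fixed (a b : ℝ) (hp : c * p + d = p) :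
    Preceq (fun x => c * x + d) (fun x => a * x + b) ↔
      c * (a * p + b) + d ≤ a * p + b := by
  rw [preceq_linear_iff_apply c d a b p, hp]

end FixedPoint

section Gam

variable {a b : ℝ}

theorem gam_of_ne_one (ha : a ≠ 1) (b : ℝ) : gam a b = ((b / (1 - a) : ℝ) : EReal) :=
  if_neg ha

theorem exists_fixed_eq_gam (ha : a ≠ 1) (b : ℝ) :
    ∃ p : ℝ, a * p + b = p ∧ gam a b = p := by
  refine ⟨b / (1 - a), ?_, gam_of_ne_one ha b⟩
  have : 1 - a ≠ 0 := sub_ne_zero.2 ha.symm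
  field_simp
  ring

theorem gam_le_coe_iff_of_lt_one (ha : a < 1) (b x : ℝ) :
    gam a b ≤ x ↔ a * x + b ≤ x := by
  rw [gam_of_ne_one ha.ne, EReal.coe_le_coe_iff, div_le_iff₀ (sub_pos.2 ha)]
  constructor <;> intro h <;> linarith

theorem coe_le_gam_iff_of_lt_one (ha : a < 1) (b x : ℝ) :
    (x : EReal) ≤ gam a b ↔ x ≤ a * x + b := by
  rw [gam_of_ne_one ha.ne, EReal.coe_le_coe_iff, le_div_iff₀ (sub_pos.2 ha)]
  constructor <;> intro h <;> linarith

theorem gam_le_coe_iff_of_one_le (ha : 1 ≤ a) (b x : ℝ) :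
    gam a b ≤ x ↔ x ≤ a * x + b := by
  rcases ha.eq_or_lt with rfl | ha
  · by_cases hb : b < 0 <;> simp [gam, hb, not_lt.1]
  · rw [gam_of_ne_one ha.ne', EReal.coe_le_coe_iff, div_le_iff_of_neg (sub_neg.2 ha)]
    constructor <;> intro h <;> linarith

theorem coe_le_gam_iff_of_one_le (ha : 1 ≤ a) (hab : (a, b) ≠ (1, 0)) (x : ℝ) :
    (x : EReal) ≤ gam a b ↔ a * x + b ≤ x := by
  rcases ha.eq_or_lt with rfl | ha
  · have hb : b ≠ 0 := fun hb => hab (by rw [hb])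
    by_cases hb_neg : b < 0
    · simp [gam, hb_neg, hb_neg.le]
    · simp [gam, hb_neg, hb.le_iff_lt]
  · rw [gam_of_ne_one ha.ne', EReal.coe_le_coe_iff, le_div_iff_of_neg (sub_neg.2 ha)]
    constructor <;> intro h <;> linarith

end Gam

section Comparison

variable {a c : ℝ}

theorem preceq_linear_iff_gam_le_of_one_le_of_one_lt (ha : 1 ≤ a) (hc : 1 < c) (b d : ℝ) :
    Preceq (fun x => a * x + b) (fun x => c * x + d) ↔ gam a b ≤ gam c d := by
  obtain ⟨p, hp, hγ⟩ := exists_fixed_eq_gam hc.ne' d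
  rw [preceq_linear_iff_of_right_fixed a b hp, ← gam_le_coe_iff_of_one_le hc.le, hγ,
    EReal.coe_le_coe_iff, ← gam_le_coe_iff_of_one_le ha]

theorem preceq_linear_iff_gam_le_of_one_lt_of_one_le {d : ℝ} (ha : 1 < a) (hc : 1 ≤ c)
    (hcd : (c, d) ≠ (1, 0)) (b : ℝ) :
    Preceq (fun x => a * x + b) (fun x => c * x + d) ↔ gam a b ≤ gam c d := by
  obtain ⟨p, hp, hγ⟩ := exists_fixed_eq_gam ha.ne' b
  have hab : (a, b) ≠ (1, 0) := fun h => ha.ne' (congrArg Prod.fst h)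
  rw [preceq_linear_iff_of_left_fixed c d hp, ← coe_le_gam_iff_of_one_le ha.le hab, hγ,
    EReal.coe_le_coe_iff, ← coe_le_gam_iff_of_one_le hc hcd]

theorem preceq_linear_iff_gam_le_of_lt_one (ha : a < 1) (hc : c < 1) (b d : ℝ) :
    Preceq (fun x => a * x + b) (fun x => c * x + d) ↔ gam a b ≤ gam c d := by
  obtain ⟨p, hp, hγ⟩ := exists_fixed_eq_gam hc.ne d
  rw [preceq_linear_iff_of_right_fixed a b hp, ← coe_le_gam_iff_of_lt_one hc, hγ,
    EReal.coe_le_coe_iff, ← gam_le_coe_iff_of_lt_one ha]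

theorem preceq_linear_iff_gam_ge_of_one_le_of_lt_one {b : ℝ} (ha : 1 ≤ a)
    (hab : (a, b) ≠ (1, 0)) (hc : c < 1) (d : ℝ) :
    Preceq (fun x => a * x + b) (fun x => c * x + d) ↔ gam c d ≤ gam a b := by
  obtain ⟨p, hp, hγ⟩ := exists_fixed_eq_gam hc.ne d
  rw [preceq_linear_iff_of_right_fixed a b hp, ← coe_le_gam_iff_of_lt_one hc, hγ,
    EReal.coe_le_coe_iff, ← coe_le_gam_iff_of_one_le ha hab]

theorem preceq_linear_iff_gam_ge_of_lt_one_of_one_le (hc : c < 1) (ha : 1 ≤ a) (d b : ℝ) :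
    Preceq (fun x => c * x + d) (fun x => a * x + b) ↔ gam a b ≤ gam c d := by
  obtain ⟨p, hp, hγ⟩ := exists_fixed_eq_gam hc.ne d
  rw [preceq_linear_iff_of_left_fixed a b hp, ← gam_le_coe_iff_of_lt_one hc, hγ,
    EReal.coe_le_coe_iff, ← gam_le_coe_iff_of_one_le ha]

end Comparison

theorem stmt5_general (ai bi aj bj : ℝ)
    (hnidi : (ai, bi) ≠ (1, 0)) (hnidj : (aj, bj) ≠ (1, 0)) :
    (ai = 1 → aj = 1 →
      Preceq (fun x => ai * x + bi) (fun x => aj * x + bj) ∧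
      Preceq (fun x => aj * x + bj) (fun x => ai * x + bi)) ∧
    (1 ≤ ai → 1 ≤ aj → 1 < ai * aj →
      (Preceq (fun x => ai * x + bi) (fun x => aj * x + bj) ↔ gam ai bi ≤ gam aj bj)) ∧
    (ai < 1 → aj < 1 →
      (Preceq (fun x => ai * x + bi) (fun x => aj * x + bj) ↔ gam ai bi ≤ gam aj bj)) ∧
    (1 ≤ ai → aj < 1 →
      (Preceq (fun x => ai * x + bi) (fun x => aj * x + bj) ↔ gam aj bj ≤ gam ai bi) ∧
      (Preceq (fun x => aj * x + bj) (fun x => ai * x + bi) ↔ gam ai bi ≤ gam aj bj)) := by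
  refine ⟨?_, fun hi hj hij => ?_, fun hi hj => ?_, fun hi hj => ⟨?_, ?_⟩⟩
  · rintro rfl rfl
    simp only [preceq_linear_iff_apply _ _ _ _ 0]
    exact ⟨by linarith, by linarith⟩
  · rcases hj.lt_or_eq with hj | rfl
    · exact preceq_linear_iff_gam_le_of_one_le_of_one_lt hi hj bi bj
    · exact preceq_linear_iff_gam_le_of_one_lt_of_one_le (by rwa [mul_one] at hij) hj hnidj bi
  · exact preceq_linear_iff_gam_le_of_lt_one hi hj bi bj
  · exact preceq_linear_iff_gam_ge_of_one_le_of_lt_one hi hnidi hj bj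
  · exact preceq_linear_iff_gam_ge_of_lt_one_of_one_le hj hi bj bi

theorem stmt5 (ai bi aj bj : ℝ) (hai : 0 ≤ ai) (haj : 0 ≤ aj)
    (hnidi : (ai, bi) ≠ (1, 0)) (hnidj : (aj, bj) ≠ (1, 0)) :
    (ai = 1 → aj = 1 →
      Preceq (fun x => ai * x + bi) (fun x => aj * x + bj) ∧
      Preceq (fun x => aj * x + bj) (fun x => ai * x + bi)) ∧
    (1 ≤ ai → 1 ≤ aj → 1 < ai * aj →
      (Preceq (fun x => ai * x + bi) (fun x => aj * x + bj) ↔ gam ai bi ≤ gam aj bj)) ∧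
    (ai < 1 → aj < 1 →
      (Preceq (fun x => ai * x + bi) (fun x => aj * x + bj) ↔ gam ai bi ≤ gam aj bj)) ∧
    (1 ≤ ai → aj < 1 →
      (Preceq (fun x => ai * x + bi) (fun x => aj * x + bj) ↔ gam aj bj ≤ gam ai bi) ∧
      (Preceq (fun x => aj * x + bj) (fun x => ai * x + bi) ↔ gam ai bi ≤ gam aj bj)) :=
  stmt5_general ai bi aj bj hnidi hnidj
end

section
/- Let f_i(x) = a_i x + b_i and f_j(x) = a_j x + b_j be monotone nondecreasing linear functions that are not the identity (a_i, a_j ≥ 0 and (a_i, b_i), (a_j, b_j) ≠ (1, 0)), and let f̄_i(x) = max{f_i(x), x}, f̄_j(x) = max{f_j(x), x}. Then: (a) if a_i, a_j ≥ 1 and γ(f_i) ≤ γ(f_j), then f̄_i ≼ f̄_j; (b) if a_i, a_j < 1 and γ(f_i) ≤ γ(f_j), then f̄_i ≼ f̄_j; (c) if a_i < 1, a_j ≥ 1 and γ(f_i) ≤ γ(f_j), then f̄_i ≃ f̄_j; (d) if a_i ≥ 1, a_j < 1 and γ(f_i) ≤ γ(f_j), then f̄_j ≼ f̄_i. -/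
section SupId

variable {α : Type*} [LinearOrder α] {f g : α → α}

theorem sup_id_comp_sup_id_le (hf : Monotone f) (hg : Monotone g)
    (h : ∀ x, f (g x) ≤ (g ⊔ id) ((f ⊔ id) x)) :
    (f ⊔ id) ∘ (g ⊔ id) ≤ (g ⊔ id) ∘ (f ⊔ id) := by
  intro x
  have hfx : f x ≤ (g ⊔ id) ((f ⊔ id) x) :=
    calc f x ≤ (f ⊔ id) x := le_sup_left
      _ ≤ (g ⊔ id) ((f ⊔ id) x) := le_sup_right
  have hfgx : f ((g ⊔ id) x) ≤ (g ⊔ id) ((f ⊔ id) x) :=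
    (hf.map_sup (g x) x).trans_le (sup_le (h x) hfx)
  exact sup_le hfgx ((hg.sup monotone_id) le_sup_right)

theorem sup_id_comp_sup_id_le_of_comp_le (hf : Monotone f) (hg : Monotone g)
    (h : f ∘ g ≤ g ∘ f) : (f ⊔ id) ∘ (g ⊔ id) ≤ (g ⊔ id) ∘ (f ⊔ id) :=
  sup_id_comp_sup_id_le hf hg fun x =>
    calc f (g x) ≤ g (f x) := h x
      _ ≤ g ((f ⊔ id) x) := hg le_sup_left
      _ ≤ (g ⊔ id) ((f ⊔ id) x) := le_sup_left

theorem sup_id_comp_sup_id_le_of_le_self_or (hf : Monotone f) (hg : Monotone g)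
    (h : ∀ x, g x ≤ x ∨ f (g x) ≤ g x) : (f ⊔ id) ∘ (g ⊔ id) ≤ (g ⊔ id) ∘ (f ⊔ id) :=
  sup_id_comp_sup_id_le hf hg fun x => by
    rcases h x with hgx | hfgx
    · calc f (g x) ≤ f x := hf hgx
        _ ≤ (f ⊔ id) x := le_sup_left
        _ ≤ (g ⊔ id) ((f ⊔ id) x) := le_sup_right
    · calc f (g x) ≤ g x := hfgx
        _ ≤ g ((f ⊔ id) x) := hg le_sup_right
        _ ≤ (g ⊔ id) ((f ⊔ id) x) := le_sup_left

end SupId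

/-- The linear function `x ↦ a x + b`, so that `f̄` is `affineFun a b ⊔ id` for `f x = a x + b`. -/
def affineFun {R : Type*} [Mul R] [Add R] (a b : R) : R → R := fun x => a * x + b

theorem monotone_affineFun {R : Type*} [Semiring R] [PartialOrder R] [IsOrderedRing R] {a : R}
    (ha : 0 ≤ a) (b : R) : Monotone (affineFun a b) :=
  fun _ _ hxy => add_le_add_left (mul_le_mul_of_nonneg_left hxy ha) b

theorem affineFun_comp_le_comp_of_apply_le {R : Type*} [CommRing R] [PartialOrder R]
    [IsOrderedAddMonoid R] {a b c d : R} (p : R)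
    (h : affineFun a b (affineFun c d p) ≤ affineFun c d (affineFun a b p)) :
    affineFun a b ∘ affineFun c d ≤ affineFun c d ∘ affineFun a b := by
  intro x
  have defect_eq : affineFun a b (affineFun c d x) - affineFun c d (affineFun a b x) =
      affineFun a b (affineFun c d p) - affineFun c d (affineFun a b p) := by
    simp only [affineFun]
    ring
  exact sub_nonpos.1 (defect_eq.trans_le (sub_nonpos.2 h))

section Gam

variable {a b c d x : ℝ}

theorem exists_gam_eq_coe_and_isFixedPt (ha : a ≠ 1) (b : ℝ) :
    ∃ p : ℝ, gam a b = p ∧ Function.IsFixedPt (affineFun a b) p := by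
  have ha' : 1 - a ≠ 0 := sub_ne_zero.2 ha.symm
  refine ⟨b / (1 - a), if_neg ha, ?_⟩
  simp only [Function.IsFixedPt, affineFun]
  field_simp
  ring

theorem affineFun_le_self_iff_gam_le (ha : a < 1) : affineFun a b x ≤ x ↔ gam a b ≤ x := by
  rw [gam, if_neg ha.ne, EReal.coe_le_coe_iff, div_le_iff₀ (sub_pos.2 ha), affineFun]
  constructor <;> intro h <;> linarith

theorem self_le_affineFun_iff_le_gam (ha : a < 1) : x ≤ affineFun a b x ↔ x ≤ gam a b := by
  rw [gam, if_neg ha.ne, EReal.coe_le_coe_iff, le_div_iff₀ (sub_pos.2 ha), affineFun]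
  constructor <;> intro h <;> linarith

theorem affineFun_le_self_of_le_gam (ha : 1 ≤ a) (hx : x ≤ gam a b) : affineFun a b x ≤ x := by
  rcases ha.eq_or_lt with rfl | ha
  · have hb : b < 0 := by
      by_contra hb
      simp [gam, hb] at hx
    simp only [affineFun]
    linarith
  · rw [gam, if_neg ha.ne', EReal.coe_le_coe_iff, le_div_iff_of_neg (sub_neg.2 ha)] at hx
    simp only [affineFun]
    linarith

theorem self_le_affineFun_of_gam_le (ha : 1 ≤ a) (hx : gam a b ≤ x) : x ≤ affineFun a b x := by
  rcases ha.eq_or_lt with rfl | ha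
  · have hb : 0 ≤ b := by
      by_contra! hb
      simp [gam, hb] at hx
    simp only [affineFun]
    linarith
  · rw [gam, if_neg ha.ne', EReal.coe_le_coe_iff, div_le_iff_of_neg (sub_neg.2 ha)] at hx
    simp only [affineFun]
    linarith

theorem affineFun_le_gam (ha₀ : 0 ≤ a) (hx : x ≤ gam a b) : affineFun a b x ≤ gam a b := by
  rcases lt_or_ge a 1 with ha | ha
  · obtain ⟨p, hp, hfp⟩ := exists_gam_eq_coe_and_isFixedPt ha.ne b
    rw [hp, EReal.coe_le_coe_iff] at hx ⊢
    exact (monotone_affineFun ha₀ b hx).trans_eq hfp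
  · exact (EReal.coe_le_coe_iff.2 (affineFun_le_self_of_le_gam ha hx)).trans hx

theorem affineFun_comp_le_comp_of_one_le (ha : 1 ≤ a) (hc : 1 ≤ c) (hγ : gam a b ≤ gam c d) :
    affineFun a b ∘ affineFun c d ≤ affineFun c d ∘ affineFun a b := by
  by_cases ha₁ : a = 1
  · by_cases hc₁ : c = 1
    · subst ha₁ hc₁
      refine affineFun_comp_le_comp_of_apply_le 0 (le_of_eq ?_)
      simp only [affineFun]
      ring
    · obtain ⟨q, hq, hgq⟩ := exists_gam_eq_coe_and_isFixedPt hc₁ d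
      have hfq : q ≤ affineFun a b q := self_le_affineFun_of_gam_le ha (hγ.trans_eq hq)
      refine affineFun_comp_le_comp_of_apply_le q ?_
      rw [hgq.eq]
      exact self_le_affineFun_of_gam_le hc (hq.trans_le (EReal.coe_le_coe_iff.2 hfq))
  · obtain ⟨p, hp, hfp⟩ := exists_gam_eq_coe_and_isFixedPt ha₁ b
    have hgp : affineFun c d p ≤ p := affineFun_le_self_of_le_gam hc (hp.symm.trans_le hγ)
    refine affineFun_comp_le_comp_of_apply_le p ?_
    rw [hfp.eq]
    exact affineFun_le_self_of_le_gam ha ((EReal.coe_le_coe_iff.2 hgp).trans_eq hp.symm)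

theorem affineFun_comp_le_comp_of_lt_one (ha : a < 1) (hc : c < 1) (hγ : gam a b ≤ gam c d) :
    affineFun a b ∘ affineFun c d ≤ affineFun c d ∘ affineFun a b := by
  obtain ⟨p, hp, hfp⟩ := exists_gam_eq_coe_and_isFixedPt ha.ne b
  have hgp : p ≤ affineFun c d p := (self_le_affineFun_iff_le_gam hc).2 (hp.symm.trans_le hγ)
  refine affineFun_comp_le_comp_of_apply_le p ?_
  rw [hfp.eq]
  exact (affineFun_le_self_iff_gam_le ha).2 (hp.trans_le (EReal.coe_le_coe_iff.2 hgp))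

theorem affineFun_comp_le_comp_of_one_le_of_lt_one (ha : 1 ≤ a) (hc : c < 1)
    (hγ : gam a b ≤ gam c d) : affineFun c d ∘ affineFun a b ≤ affineFun a b ∘ affineFun c d := by
  obtain ⟨q, hq, hgq⟩ := exists_gam_eq_coe_and_isFixedPt hc.ne d
  have hfq : q ≤ affineFun a b q := self_le_affineFun_of_gam_le ha (hγ.trans_eq hq)
  refine affineFun_comp_le_comp_of_apply_le q ?_
  rw [hgq.eq]
  exact (affineFun_le_self_iff_gam_le hc).2 (hq.trans_le (EReal.coe_le_coe_iff.2 hfq))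

theorem affineFun_le_self_or_comp_le_of_one_le (ha : a < 1) (hc : 1 ≤ c)
    (hγ : gam a b ≤ gam c d) (x : ℝ) :
    affineFun c d x ≤ x ∨ affineFun a b (affineFun c d x) ≤ affineFun c d x := by
  refine or_iff_not_imp_left.2 fun hgx => (affineFun_le_self_iff_gam_le ha).2 ?_
  calc gam a b ≤ gam c d := hγ
    _ ≤ x := (not_le.1 (mt (affineFun_le_self_of_le_gam hc) hgx)).le
    _ ≤ affineFun c d x := EReal.coe_le_coe_iff.2 (not_le.1 hgx).le

theorem affineFun_le_self_or_comp_le_of_lt_one (ha₀ : 0 ≤ a) (ha : a < 1) (hc : 1 ≤ c)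
    (hγ : gam a b ≤ gam c d) (x : ℝ) :
    affineFun a b x ≤ x ∨ affineFun c d (affineFun a b x) ≤ affineFun a b x := by
  refine or_iff_not_imp_left.2 fun hfx => affineFun_le_self_of_le_gam hc ?_
  have hx : x ≤ gam a b := (self_le_affineFun_iff_le_gam ha).1 (not_le.1 hfx).le
  exact (affineFun_le_gam ha₀ hx).trans hγ

end Gam

theorem stmt6 (ai bi aj bj : ℝ) (hai : 0 ≤ ai) (haj : 0 ≤ aj)
    (hnidi : (ai, bi) ≠ (1, 0)) (hnidj : (aj, bj) ≠ (1, 0))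
    (hg : gam ai bi ≤ gam aj bj) :
    (1 ≤ ai → 1 ≤ aj →
      Preceq (fun x => max (ai * x + bi) x) (fun x => max (aj * x + bj) x)) ∧
    (ai < 1 → aj < 1 →
      Preceq (fun x => max (ai * x + bi) x) (fun x => max (aj * x + bj) x)) ∧
    (ai < 1 → 1 ≤ aj →
      Preceq (fun x => max (ai * x + bi) x) (fun x => max (aj * x + bj) x) ∧
      Preceq (fun x => max (aj * x + bj) x) (fun x => max (ai * x + bi) x)) ∧
    (1 ≤ ai → aj < 1 →
      Preceq (fun x => max (aj * x + bj) x) (fun x => max (ai * x + bi) x)) := by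
  have hfi := monotone_affineFun hai bi
  have hfj := monotone_affineFun haj bj
  refine ⟨fun hi hj => ?_, fun hi hj => ?_, fun hi hj => ⟨?_, ?_⟩, fun hi hj => ?_⟩
  · exact sup_id_comp_sup_id_le_of_comp_le hfi hfj (affineFun_comp_le_comp_of_one_le hi hj hg)
  · exact sup_id_comp_sup_id_le_of_comp_le hfi hfj (affineFun_comp_le_comp_of_lt_one hi hj hg)
  · exact sup_id_comp_sup_id_le_of_le_self_or hfi hfj
      (affineFun_le_self_or_comp_le_of_one_le hi hj hg)
  · exact sup_id_comp_sup_id_le_of_le_self_or hfj hfi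
      (affineFun_le_self_or_comp_le_of_lt_one hai hi hj hg)
  · exact sup_id_comp_sup_id_le_of_comp_le hfj hfi
      (affineFun_comp_le_comp_of_one_le_of_lt_one hi hj hg)
end

section
/- Let f_i(x) = a_i x + b_i (i ∈ [n]) be monotone nondecreasing linear functions, none of which is the identity (a_i ≥ 0 and (a_i, b_i) ≠ (1, 0)). Let σ be a permutation of [n] compatible with the lexicographic order with respect to (δ(f_i), γ(f_i)). Then i ≤ j implies f̄_{σ(i)} ≼ f̄_{σ(j)} for all i, j ∈ [n], where f̄_i(x) = max{f_i(x), x}. -/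
/-- `δ` of the linear function `x ↦ a x + b`: `+1` if `a ≥ 1`, `-1` if `a < 1`. -/
noncomputable def del (a : ℝ) : ℤ := if 1 ≤ a then 1 else -1

/-!
Since `ḡ = g ⊔ id` is monotone and lies above `id`, the relation `f̄ ≼ ḡ` reduces to
`f (g x) ≤ ḡ (f̄ x)` for all `x`. This is clear if `f ≼ g`, which for linear functions with slopes
strictly on the same side of `1` is exactly the comparison `γ f ≤ γ g` of their fixed points. It
also holds if `f` has slope at most `1` and `g` has slope at least `1`: when `x ≤ f x` and
`x ≤ g x`, passing from `x` to `g x` increases `f` by at most `g x - x`, and passing from `x` to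
`f x` increases `g` by at least `f x - x`. In the only remaining case, `f` of slope greater than
`1` and `g` of slope `1`, the condition `γ f ≤ γ g` forces `γ g = ⊤`, so `g` is a negative shift
and `ḡ = id`.
-/

section General

variable {f g : ℝ → ℝ}

lemma preceq_sup_id_of_forall_le (hg : Monotone g)
    (h : ∀ x, f (g x) ≤ (g ⊔ id) ((f ⊔ id) x)) : Preceq (f ⊔ id) (g ⊔ id) := by
  intro x
  have hg_sup : Monotone (g ⊔ id) := hg.sup monotone_id
  refine sup_le ?_ (hg_sup le_sup_right)
  rcases le_total (g x) x with hgx | hxg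
  · have hx : (g ⊔ id) x = x := sup_eq_right.2 hgx
    rw [hx]
    exact le_sup_left.trans le_sup_right
  · have hx : (g ⊔ id) x = g x := sup_eq_left.2 hxg
    rw [hx]
    exact h x

lemma Preceq.sup_id (hg : Monotone g) (h : Preceq f g) : Preceq (f ⊔ id) (g ⊔ id) :=
  preceq_sup_id_of_forall_le hg fun x => calc
    f (g x) ≤ g (f x) := h x
    _ ≤ g ((f ⊔ id) x) := hg le_sup_left
    _ ≤ (g ⊔ id) ((f ⊔ id) x) := le_sup_left

lemma preceq_sup_id_of_le_id (hg : g ≤ id) : Preceq (f ⊔ id) (g ⊔ id) := by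
  rw [sup_eq_right.2 hg]
  exact fun _ => le_rfl

lemma preceq_sup_id_of_monotone_id_sub (hf : Monotone f) (hf_sub : Monotone (id - f))
    (hg_sub : Monotone (g - id)) : Preceq (f ⊔ id) (g ⊔ id) := by
  have hg : Monotone g := sub_add_cancel g id ▸ hg_sub.add monotone_id
  refine preceq_sup_id_of_forall_le hg fun x => ?_
  rcases le_total (g x) x with hgx | hxg
  · calc
      f (g x) ≤ f x := hf hgx
      _ ≤ (f ⊔ id) x := le_sup_left
      _ ≤ (g ⊔ id) ((f ⊔ id) x) := le_sup_right
  have hf_step : x - f x ≤ g x - f (g x) := hf_sub hxg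
  rcases le_total (f x) x with hfx | hxf
  · calc
      f (g x) ≤ g x := by linarith
      _ ≤ g ((f ⊔ id) x) := hg le_sup_right
      _ ≤ (g ⊔ id) ((f ⊔ id) x) := le_sup_left
  · have hg_step : g x - x ≤ g (f x) - f x := hg_sub hxf
    calc
      f (g x) ≤ g (f x) := by linarith
      _ ≤ g ((f ⊔ id) x) := hg le_sup_left
      _ ≤ (g ⊔ id) ((f ⊔ id) x) := le_sup_left

end General

section Linear

variable {a b c d : ℝ}

lemma monotone_mul_add_const (ha : 0 ≤ a) : Monotone fun x : ℝ => a * x + b :=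
  (monotone_mul_left_of_nonneg ha).add_const b

lemma preceq_mul_add_iff :
    Preceq (fun x => a * x + b) (fun x => c * x + d) ↔ b * (1 - c) ≤ d * (1 - a) := by
  have le_iff (x : ℝ) :
      a * (c * x + d) + b ≤ c * (a * x + b) + d ↔ b * (1 - c) ≤ d * (1 - a) := by
    constructor <;> intro h <;> linarith
  simp only [Preceq, le_iff, forall_const]

lemma gam_le_gam_iff (h : 0 < (1 - a) * (1 - c)) :
    gam a b ≤ gam c d ↔ b * (1 - c) ≤ d * (1 - a) := by
  have ha : 1 - a ≠ 0 := left_ne_zero_of_mul h.ne'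
  have hc : 1 - c ≠ 0 := right_ne_zero_of_mul h.ne'
  rw [gam, gam, if_neg (sub_ne_zero.1 ha).symm, if_neg (sub_ne_zero.1 hc).symm,
    EReal.coe_le_coe_iff, ← mul_div_mul_right b (1 - a) hc, ← mul_div_mul_left d (1 - c) ha,
    div_le_div_iff_of_pos_right h, mul_comm (1 - a) d]

lemma neg_of_gam_le_gam_one (ha : a ≠ 1) (h : gam a b ≤ gam 1 d) : d < 0 := by
  by_contra hd
  simp [gam, ha, hd] at h

lemma del_lt_del_iff : del a < del c ↔ a < 1 ∧ 1 ≤ c := by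
  unfold del
  split_ifs <;> simp [*, ← not_le]

lemma del_eq_del_iff : del a = del c ↔ (1 ≤ a ↔ 1 ≤ c) := by
  unfold del
  split_ifs <;> simp [*]

lemma preceq_max_of_le_one_of_one_le (ha : 0 ≤ a) (ha_one : a ≤ 1) (hc : 1 ≤ c) :
    Preceq (fun x => max (a * x + b) x) (fun x => max (c * x + d) x) := by
  refine preceq_sup_id_of_monotone_id_sub (monotone_mul_add_const ha) ?_ ?_
  · intro x y hxy
    change x - (a * x + b) ≤ y - (a * y + b)
    linarith [mul_le_mul_of_nonneg_left hxy (sub_nonneg.2 ha_one)]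
  · intro x y hxy
    change c * x + d - x ≤ c * y + d - y
    linarith [mul_le_mul_of_nonneg_left hxy (sub_nonneg.2 hc)]

lemma preceq_max_of_gam_le (hc : 0 ≤ c) (h : 0 < (1 - a) * (1 - c))
    (hγ : gam a b ≤ gam c d) :
    Preceq (fun x => max (a * x + b) x) (fun x => max (c * x + d) x) :=
  (preceq_mul_add_iff.2 ((gam_le_gam_iff h).1 hγ)).sup_id (monotone_mul_add_const hc)

theorem stmt7_general (ha : 0 ≤ a) (hc : 0 ≤ c)
    (h : del a < del c ∨ (del a = del c ∧ gam a b ≤ gam c d)) :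
    Preceq (fun x => max (a * x + b) x) (fun x => max (c * x + d) x) := by
  rcases h with hδ | ⟨hδ, hγ⟩
  · obtain ⟨ha_lt, hc_ge⟩ := del_lt_del_iff.1 hδ
    exact preceq_max_of_le_one_of_one_le ha ha_lt.le hc_ge
  have hac : 1 ≤ a ↔ 1 ≤ c := del_eq_del_iff.1 hδ
  rcases lt_trichotomy a 1 with ha_lt | rfl | ha_gt
  · have hc_lt : c < 1 := lt_of_not_ge (mt hac.2 ha_lt.not_ge)
    exact preceq_max_of_gam_le hc (mul_pos (sub_pos.2 ha_lt) (sub_pos.2 hc_lt)) hγ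
  · exact preceq_max_of_le_one_of_one_le ha le_rfl (hac.1 le_rfl)
  · rcases (hac.1 ha_gt.le).eq_or_lt with rfl | hc_gt
    · have hd : d < 0 := neg_of_gam_le_gam_one ha_gt.ne' hγ
      have hg : (fun x => 1 * x + d) ≤ id := fun x => by
        change 1 * x + d ≤ x
        linarith
      exact preceq_sup_id_of_le_id hg
    · exact preceq_max_of_gam_le hc
        (mul_pos_of_neg_of_neg (sub_neg.2 ha_gt) (sub_neg.2 hc_gt)) hγ

end Linear

/-- If `σ` is compatible with the lexicographic order on `(δ(fᵢ), γ(fᵢ))`, then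
`i ≤ j` implies `f̄_{σ(i)} ≼ f̄_{σ(j)}`, where `f̄ᵢ(x) = max (aᵢ x + bᵢ) x`. -/
theorem stmt7 (n : ℕ) (a b : Fin n → ℝ) (ha : ∀ i, 0 ≤ a i)
    (hnid : ∀ i, (a i, b i) ≠ (1, 0)) (σ : Equiv.Perm (Fin n))
    (hcompat : ∀ i j : Fin n, i < j →
      del (a (σ i)) < del (a (σ j)) ∨
        (del (a (σ i)) = del (a (σ j)) ∧
          gam (a (σ i)) (b (σ i)) ≤ gam (a (σ j)) (b (σ j)))) :
    ∀ i j : Fin n, i ≤ j →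
      Preceq (fun x => max (a (σ i) * x + b (σ i)) x)
        (fun x => max (a (σ j) * x + b (σ j)) x) := by
  intro i j hij
  exact stmt7_general (ha _) (ha _)
    (hij.lt_or_eq.elim (hcompat i j) fun h => h ▸ .inr ⟨rfl, le_rfl⟩)
end

section
/- Let c ∈ ℝ and, for i ∈ [n], let a_i ≥ 0, b_i, c_i ∈ ℝ, and define h̄_i(x) = max{a_i x + b_i, c_i, x} and f̄_i(x) = max{a_i x + b_i, x}. Then there exists a permutation σ of [n] that is optimal for the maximum total composition ordering problem ((h̄_i)_{i∈[n]}, c) such that no index i with 2 ≤ i ≤ n satisfies f̄_{σ(i)}( h̄_{σ(i−1)}∘⋯∘h̄_{σ(1)}(c) ) < c_{σ(i)}. -/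
section ResetStep

variable {ι α : Type*} [LinearOrder α] {f : ι → α → α} {c : ι → α}

/-- The map `h̄ᵢ = max (f̄ᵢ, cᵢ)`, with `f` in the role of `f̄`. The value comes before the index,
so that a composition along a list of indices is a `List.foldl`. -/
def resetStep (f : ι → α → α) (c : ι → α) (x : α) (i : ι) : α :=
  max (f i x) (c i)

/-- Composing the maps `resetStep f c` along `l` from `x`, head first, no constant `c i` strictly
exceeds `f i` at the value where it is applied. -/
def NoReset (f : ι → α → α) (c : ι → α) : List ι → α → Prop
  | [], _ => True
  | i :: l, x => c i ≤ f i x ∧ NoReset f c l (resetStep f c x i)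

lemma le_resetStep (hf : ∀ i x, x ≤ f i x) (x : α) (i : ι) : x ≤ resetStep f c x i :=
  (hf i x).trans (le_max_left _ _)

lemma monotone_resetStep (hf : ∀ i, Monotone (f i)) (i : ι) :
    Monotone fun x ↦ resetStep f c x i :=
  fun _ _ hxy ↦ max_le_max_right (c i) (hf i hxy)

lemma NoReset.mono (hf : ∀ i, Monotone (f i)) {l : List ι} {x y : α} (hxy : x ≤ y)
    (hl : NoReset f c l x) : NoReset f c l y := by
  induction l generalizing x y with
  | nil => trivial
  | cons i l ih => exact ⟨hl.1.trans (hf i hxy), ih (monotone_resetStep hf i hxy) hl.2⟩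

lemma le_foldl_resetStep (hf : ∀ i x, x ≤ f i x) (l : List ι) (x : α) :
    x ≤ l.foldl (resetStep f c) x := by
  induction l generalizing x with
  | nil => exact le_rfl
  | cons i l ih => exact (le_resetStep hf x i).trans (ih _)

lemma const_le_foldl_resetStep (hf : ∀ i x, x ≤ f i x) {l : List ι} {k : ι} (hk : k ∈ l) (x : α) :
    c k ≤ l.foldl (resetStep f c) x := by
  obtain ⟨p, q, rfl⟩ := List.append_of_mem hk
  rw [List.foldl_append, List.foldl_cons]
  exact (le_max_right _ _).trans (le_foldl_resetStep hf q _)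

lemma noReset_append_of_const_le (hf : ∀ i x, x ≤ f i x) {p q : List ι} {x : α}
    (hp : ∀ k ∈ p, c k ≤ x) (hq : NoReset f c q (p.foldl (resetStep f c) x)) :
    NoReset f c (p ++ q) x := by
  induction p generalizing x with
  | nil => exact hq
  | cons i p ih =>
    obtain ⟨hi, hp⟩ := List.forall_mem_cons.1 hp
    exact ⟨hi.trans (hf i x), ih (fun k hk ↦ (hp k hk).trans (le_resetStep hf x i)) hq⟩

lemma NoReset.const_getElem_le {l : List ι} {x : α} (hl : NoReset f c l x) (k : ℕ)
    (hk : k < l.length) : c l[k] ≤ f l[k] ((l.take k).foldl (resetStep f c) x) := by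
  induction l generalizing x k with
  | nil => exact absurd hk (Nat.not_lt_zero k)
  | cons i l ih =>
    cases k with
    | zero => exact hl.1
    | succ k => exact ih hl.2 k (Nat.lt_of_succ_lt_succ hk)

lemma exists_last_reset {l : List ι} {x : α} (hl : ¬ NoReset f c l x) :
    ∃ p j q, l = p ++ j :: q ∧ f j (p.foldl (resetStep f c) x) < c j ∧ NoReset f c q (c j) := by
  induction l generalizing x with
  | nil => exact absurd trivial hl
  | cons i l ih =>
    by_cases htail : NoReset f c l (resetStep f c x i)
    · have hi : f i x < c i := lt_of_not_ge fun h ↦ hl ⟨h, htail⟩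
      rw [resetStep, max_eq_right hi.le] at htail
      exact ⟨[], i, l, rfl, hi, htail⟩
    · obtain ⟨p, j, q, rfl, hj, hq⟩ := ih htail
      exact ⟨i :: p, j, q, rfl, hj, hq⟩

section MoveToFront

variable {p q : List ι} {j : ι} {x : α}

lemma foldl_resetStep_append_cons_le_of_reset (hmono : ∀ i, Monotone (f i))
    (hinfl : ∀ i x, x ≤ f i x) (hj : f j (p.foldl (resetStep f c) x) < c j) :
    (p ++ j :: q).foldl (resetStep f c) x ≤ (j :: (p ++ q)).foldl (resetStep f c) x := by
  simp only [List.foldl_append, List.foldl_cons]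
  refine List.foldl_monotone (monotone_resetStep hmono) q ?_
  calc resetStep f c (p.foldl (resetStep f c) x) j
    _ = c j := max_eq_right hj.le
    _ ≤ resetStep f c x j := le_max_right _ _
    _ ≤ p.foldl (resetStep f c) (resetStep f c x j) := le_foldl_resetStep hinfl p _

lemma noReset_append_of_reset (hmono : ∀ i, Monotone (f i)) (hinfl : ∀ i x, x ≤ f i x)
    (hj : f j (p.foldl (resetStep f c) x) < c j) (hq : NoReset f c q (c j)) :
    NoReset f c (p ++ q) (resetStep f c x j) := by
  have hcj : c j ≤ resetStep f c x j := le_max_right _ _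
  refine noReset_append_of_const_le hinfl (fun k hk ↦ ?_)
    (hq.mono hmono (hcj.trans (le_foldl_resetStep hinfl p _)))
  calc c k
    _ ≤ p.foldl (resetStep f c) x := const_le_foldl_resetStep hinfl hk x
    _ ≤ f j (p.foldl (resetStep f c) x) := hinfl j _
    _ ≤ c j := hj.le
    _ ≤ resetStep f c x j := hcj

end MoveToFront

lemma exists_perm_le_foldl_and_noReset_tail (hmono : ∀ i, Monotone (f i))
    (hinfl : ∀ i x, x ≤ f i x) (l : List ι) (x : α) :
    ∃ l', l'.Perm l ∧ l.foldl (resetStep f c) x ≤ l'.foldl (resetStep f c) x ∧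
      ∀ i t, l' = i :: t → NoReset f c t (resetStep f c x i) := by
  by_cases hl : NoReset f c l x
  · refine ⟨l, .refl l, le_rfl, ?_⟩
    rintro i t rfl
    exact hl.2
  · obtain ⟨p, j, q, rfl, hj, hq⟩ := exists_last_reset hl
    refine ⟨j :: (p ++ q), List.perm_middle.symm,
      foldl_resetStep_append_cons_le_of_reset hmono hinfl hj, ?_⟩
    rintro _ _ ⟨⟩
    exact noReset_append_of_reset hmono hinfl hj hq

end ResetStep

lemma exists_equivPerm_ofFn_eq {n : ℕ} {l : List (Fin n)} (hl : l.Perm (List.finRange n)) :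
    ∃ σ : Equiv.Perm (Fin n), List.ofFn σ = l := by
  have hlen : l.length = n := by simpa only [List.length_finRange] using hl.length_eq
  have hs : List.ofFn (l.get ∘ Fin.cast hlen.symm) = l :=
    List.ext_getElem (by simp [hlen]) (by simp)
  have hinj : Function.Injective (l.get ∘ Fin.cast hlen.symm) := by
    rw [← List.nodup_ofFn, hs]
    exact hl.nodup_iff.2 (List.nodup_finRange n)
  exact ⟨.ofBijective _ (Finite.injective_iff_bijective.1 hinj), hs⟩

theorem stmt9_general {α : Type*} [LinearOrder α] {n : ℕ} {f : Fin n → α → α}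
    (hmono : ∀ i, Monotone (f i)) (hinfl : ∀ i x, x ≤ f i x) (c : Fin n → α) (x : α) :
    ∃ σ : Equiv.Perm (Fin n),
      (∀ τ : Equiv.Perm (Fin n),
        (List.ofFn τ).foldl (resetStep f c) x ≤ (List.ofFn σ).foldl (resetStep f c) x) ∧
      ∀ j : Fin n, 1 ≤ j.val →
        c (σ j) ≤ f (σ j) (((List.ofFn σ).take j).foldl (resetStep f c) x) := by
  obtain ⟨ρ, hρ⟩ := Finite.exists_max fun τ : Equiv.Perm (Fin n) ↦
    (List.ofFn τ).foldl (resetStep f c) x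
  obtain ⟨l, hperm, hle, hnoReset⟩ :=
    exists_perm_le_foldl_and_noReset_tail (c := c) hmono hinfl (List.ofFn ρ) x
  have hρperm : (List.ofFn ρ).Perm (List.finRange n) := by
    rw [List.ofFn_eq_map]
    exact ρ.map_finRange_perm
  obtain ⟨σ, rfl⟩ := exists_equivPerm_ofFn_eq (hperm.trans hρperm)
  refine ⟨σ, fun τ ↦ (hρ τ).trans hle, ?_⟩
  cases n with
  | zero => exact fun j ↦ j.elim0
  | succ n =>
    refine Fin.cases (fun h ↦ absurd h (by simp)) fun k _ ↦ ?_
    have hk := (hnoReset _ _ List.ofFn_succ).const_getElem_le k (by simp)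
    simpa [List.ofFn_succ] using hk

lemma compSeq_max_eq_foldl_resetStep {n : ℕ} (a b c : Fin n → ℝ) (σ : Fin n → Fin n) (k : ℕ)
    (x : ℝ) :
    compSeq (fun i x ↦ max (max (a i * x + b i) (c i)) x) σ k x =
      ((List.ofFn σ).take k).foldl (resetStep (fun i x ↦ max (a i * x + b i) x) c) x := by
  simp only [compSeq, List.map_take, List.ofFn_eq_map, max_right_comm _ (c _)]
  rfl

lemma monotone_max_affine_self {a : ℝ} (ha : 0 ≤ a) (b : ℝ) :
    Monotone fun x ↦ max (a * x + b) x :=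
  ((monotone_id.const_mul ha).add_const b).max monotone_id

/-- For `h̄ᵢ(x) = max (aᵢx + bᵢ) (cᵢ) x` and `f̄ᵢ(x) = max (aᵢx + bᵢ) x`, there is an
optimal permutation `σ` for the maximum total composition ordering problem `((h̄ᵢ)ᵢ, c)`
such that no position `j ≥ 2` (1-indexed; `j.val ≥ 1` with 0-indexing) satisfies
`f̄_{σ(j)}(h̄_{σ(j-1)} ∘ ⋯ ∘ h̄_{σ(1)}(c)) < c_{σ(j)}`. -/
theorem stmt9 (n : ℕ) (c : ℝ) (a b cc : Fin n → ℝ) (ha : ∀ i, 0 ≤ a i) :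
    ∃ σ : Equiv.Perm (Fin n),
      (∀ τ : Equiv.Perm (Fin n),
        compSeq (fun i x => max (max (a i * x + b i) (cc i)) x) τ n c ≤
          compSeq (fun i x => max (max (a i * x + b i) (cc i)) x) σ n c) ∧
      (∀ j : Fin n, 1 ≤ j.val →
        ¬ (max (a (σ j) * compSeq (fun i x => max (max (a i * x + b i) (cc i)) x) σ j.val c
                  + b (σ j))
              (compSeq (fun i x => max (max (a i * x + b i) (cc i)) x) σ j.val c)
            < cc (σ j))) := by
  simpa only [compSeq_max_eq_foldl_resetStep, List.take_of_length_le, List.length_ofFn, le_refl,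
    not_lt] using
    stmt9_general (fun i ↦ monotone_max_affine_self (ha i) (b i)) (fun _ _ ↦ le_max_right _ _) cc c
end

section
/- Let f_i(x) = a_i x + b_i and f_j(x) = a_j x + b_j be monotone nondecreasing linear functions that are not the identity (a_i, a_j ≥ 0, (a_i, b_i), (a_j, b_j) ≠ (1, 0)). Then: (a) if γ(f_i) = γ(f_j) and f_j∘f_i is not the identity function, then γ(f_j∘f_i) = γ(f_i) = γ(f_j); (b) if γ(f_i) < γ(f_j) and a_i, a_j ≥ 1, then γ(f_i) ≤ γ(f_j∘f_i) ≤ γ(f_j); (c) if γ(f_i) < γ(f_j) and a_i, a_j < 1, then γ(f_i) ≤ γ(f_j∘f_i) ≤ γ(f_j); (d) if γ(f_i) < γ(f_j), a_i < 1 ≤ a_j, and a_i·a_j ≥ 1, then γ(f_j∘f_i) ≥ γ(f_j); (e) if γ(f_i) < γ(f_j), a_i < 1 ≤ a_j, and a_i·a_j < 1, then γ(f_j∘f_i) ≤ γ(f_i); (f) if γ(f_i) < γ(f_j), a_i ≥ 1 > a_j, and a_i·a_j ≥ 1, then γ(f_j∘f_i) ≤ γ(f_i); (g) if γ(f_i)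 < γ(f_j), a_i ≥ 1 > a_j, and a_i·a_j < 1, then γ(f_j∘f_i) ≥ γ(f_j). -/
section TestPoints

variable {a b c : ℝ}

theorem lt_gam_iff_of_lt_one (ha : a < 1) : (c : EReal) < gam a b ↔ c < a * c + b := by
  rw [gam, if_neg ha.ne, EReal.coe_lt_coe_iff, lt_div_iff₀ (sub_pos.2 ha)]
  constructor <;> intro h <;> linarith

theorem gam_lt_iff_of_lt_one (ha : a < 1) : gam a b < (c : EReal) ↔ a * c + b < c := by
  rw [gam, if_neg ha.ne, EReal.coe_lt_coe_iff, div_lt_iff₀ (sub_pos.2 ha)]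
  constructor <;> intro h <;> linarith

theorem lt_gam_iff_of_one_le (ha : 1 ≤ a) : (c : EReal) < gam a b ↔ a * c + b < c := by
  rcases ha.eq_or_lt with rfl | ha
  · by_cases hb : b < 0 <;> simp [gam, hb]
  · rw [gam, if_neg ha.ne', EReal.coe_lt_coe_iff, lt_div_iff_of_neg (sub_neg.2 ha)]
    constructor <;> intro h <;> linarith

theorem gam_le_iff_of_one_le (ha : 1 ≤ a) : gam a b ≤ (c : EReal) ↔ c ≤ a * c + b := by
  rw [← not_lt, lt_gam_iff_of_one_le ha, not_lt]

end TestPoints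

section Values

variable {a b : ℝ}

theorem gam_eq_top_iff : gam a b = ⊤ ↔ a = 1 ∧ b < 0 := by
  unfold gam
  split_ifs <;> simp [*]

theorem gam_eq_bot_iff : gam a b = ⊥ ↔ a = 1 ∧ 0 ≤ b := by
  unfold gam
  split_ifs <;> simp_all

theorem gam_eq_coe_iff {c : ℝ} : gam a b = c ↔ a ≠ 1 ∧ a * c + b = c := by
  by_cases ha : a = 1
  · by_cases hb : b < 0 <;> simp [gam, ha, hb]
  · rw [gam, if_neg ha, EReal.coe_eq_coe_iff, div_eq_iff (sub_ne_zero.2 (Ne.symm ha))]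
    exact ⟨fun h => ⟨ha, by linarith⟩, fun h => by linarith [h.2]⟩

end Values

theorem le_of_forall_between_coe_le {x y z : EReal} (hxy : x < y)
    (h : ∀ c : ℝ, x < c → c < y → (c : EReal) ≤ z) : y ≤ z := by
  refine (isLUB_Ioo hxy).2 fun e he => ?_
  lift e to ℝ using ⟨he.2.ne_top, he.1.ne_bot⟩
  exact h e he.1 he.2

theorem le_of_forall_between_le_coe {x y z : EReal} (hxy : x < y)
    (h : ∀ c : ℝ, x < c → c < y → z ≤ (c : EReal)) : z ≤ x := by
  refine (isGLB_Ioo hxy).2 fun e he => ?_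
  lift e to ℝ using ⟨he.2.ne_top, he.1.ne_bot⟩
  exact h e he.1 he.2

section Composition

variable {ai bi aj bj : ℝ}

theorem gam_comp_eq {p : EReal} (hi : gam ai bi = p) (hj : gam aj bj = p)
    (hne : (aj * ai, aj * bi + bj) ≠ (1, 0)) : gam (aj * ai) (aj * bi + bj) = p := by
  induction p with
  | bot =>
    obtain ⟨rfl, hbi⟩ := gam_eq_bot_iff.1 hi
    obtain ⟨rfl, hbj⟩ := gam_eq_bot_iff.1 hj
    exact gam_eq_bot_iff.2 ⟨one_mul 1, by linarith⟩
  | top =>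
    obtain ⟨rfl, hbi⟩ := gam_eq_top_iff.1 hi
    obtain ⟨rfl, hbj⟩ := gam_eq_top_iff.1 hj
    exact gam_eq_top_iff.2 ⟨one_mul 1, by linarith⟩
  | coe p =>
    have hpi : ai * p + bi = p := (gam_eq_coe_iff.1 hi).2
    have hpj : aj * p + bj = p := (gam_eq_coe_iff.1 hj).2
    have hp : aj * ai * p + (aj * bi + bj) = p := by linear_combination aj * hpi + hpj
    -- A linear function of slope `1` with a fixed point is the identity.
    refine gam_eq_coe_iff.2 ⟨fun ha => hne (Prod.ext ha ?_), hp⟩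
    rw [ha] at hp
    linarith

theorem comp_apply_le_of_apply_le_self {c : ℝ} (haj : 0 ≤ aj) (h : ai * c + bi ≤ c) :
    aj * ai * c + (aj * bi + bj) ≤ aj * c + bj := by
  linarith [mul_le_mul_of_nonneg_left h haj]

theorem le_comp_apply_of_self_le_apply {c : ℝ} (haj : 0 ≤ aj) (h : c ≤ ai * c + bi) :
    aj * c + bj ≤ aj * ai * c + (aj * bi + bj) := by
  linarith [mul_le_mul_of_nonneg_left h haj]

theorem left_le_gam_comp_of_one_le (h : gam ai bi ≤ gam aj bj) (hi : 1 ≤ ai)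
    (hj : 1 ≤ aj) : gam ai bi ≤ gam (aj * ai) (aj * bi + bj) := by
  refine EReal.ge_of_forall_gt_iff_ge.1 fun c hc => ?_
  have hci : ai * c + bi < c := (lt_gam_iff_of_one_le hi).1 hc
  have hcj : aj * c + bj < c := (lt_gam_iff_of_one_le hj).1 (hc.trans_le h)
  exact ((lt_gam_iff_of_one_le (one_le_mul_of_one_le_of_one_le hj hi)).2
    ((comp_apply_le_of_apply_le_self (zero_le_one.trans hj) hci.le).trans_lt hcj)).le

theorem gam_comp_le_right_of_one_le (h : gam ai bi ≤ gam aj bj) (hi : 1 ≤ ai)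
    (hj : 1 ≤ aj) : gam (aj * ai) (aj * bi + bj) ≤ gam aj bj := by
  refine EReal.le_of_forall_lt_iff_le.1 fun c hc => ?_
  have hci : c ≤ ai * c + bi := (gam_le_iff_of_one_le hi).1 (h.trans hc.le)
  have hcj : c ≤ aj * c + bj := (gam_le_iff_of_one_le hj).1 hc.le
  exact (gam_le_iff_of_one_le (one_le_mul_of_one_le_of_one_le hj hi)).2
    (hcj.trans (le_comp_apply_of_self_le_apply (zero_le_one.trans hj) hci))

theorem left_le_gam_comp_of_lt_one (haj : 0 ≤ aj) (h : gam ai bi ≤ gam aj bj) (hi : ai < 1)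
    (hj : aj < 1) : gam ai bi ≤ gam (aj * ai) (aj * bi + bj) := by
  refine EReal.ge_of_forall_gt_iff_ge.1 fun c hc => ?_
  have hci : c < ai * c + bi := (lt_gam_iff_of_lt_one hi).1 hc
  have hcj : c < aj * c + bj := (lt_gam_iff_of_lt_one hj).1 (hc.trans_le h)
  exact ((lt_gam_iff_of_lt_one (mul_lt_one_of_nonneg_of_lt_one_left haj hj hi.le)).2
    (hcj.trans_le (le_comp_apply_of_self_le_apply haj hci.le))).le

theorem gam_comp_le_right_of_lt_one (haj : 0 ≤ aj) (h : gam ai bi ≤ gam aj bj) (hi : ai < 1)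
    (hj : aj < 1) : gam (aj * ai) (aj * bi + bj) ≤ gam aj bj := by
  refine EReal.le_of_forall_lt_iff_le.1 fun c hc => ?_
  have hci : ai * c + bi < c := (gam_lt_iff_of_lt_one hi).1 (h.trans_lt hc)
  have hcj : aj * c + bj < c := (gam_lt_iff_of_lt_one hj).1 hc
  exact ((gam_lt_iff_of_lt_one (mul_lt_one_of_nonneg_of_lt_one_left haj hj hi.le)).2
    ((comp_apply_le_of_apply_le_self haj hci.le).trans_lt hcj)).le

theorem right_le_gam_comp_of_lt_one_of_one_le_mul (h : gam ai bi < gam aj bj) (hi : ai < 1)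
    (hj : 1 ≤ aj) (hij : 1 ≤ aj * ai) : gam aj bj ≤ gam (aj * ai) (aj * bi + bj) := by
  refine le_of_forall_between_coe_le h fun c hγi hγj => ?_
  have hci : ai * c + bi < c := (gam_lt_iff_of_lt_one hi).1 hγi
  have hcj : aj * c + bj < c := (lt_gam_iff_of_one_le hj).1 hγj
  exact ((lt_gam_iff_of_one_le hij).2
    ((comp_apply_le_of_apply_le_self (zero_le_one.trans hj) hci.le).trans_lt hcj)).le

theorem gam_comp_le_left_of_lt_one_of_mul_lt_one (h : gam ai bi < gam aj bj) (hi : ai < 1)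
    (hj : 1 ≤ aj) (hij : aj * ai < 1) : gam (aj * ai) (aj * bi + bj) ≤ gam ai bi := by
  refine le_of_forall_between_le_coe h fun c hγi hγj => ?_
  have hci : ai * c + bi < c := (gam_lt_iff_of_lt_one hi).1 hγi
  have hcj : aj * c + bj < c := (lt_gam_iff_of_one_le hj).1 hγj
  exact ((gam_lt_iff_of_lt_one hij).2
    ((comp_apply_le_of_apply_le_self (zero_le_one.trans hj) hci.le).trans_lt hcj)).le

theorem gam_comp_le_left_of_one_le_of_one_le_mul (h : gam ai bi < gam aj bj) (hi : 1 ≤ ai)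
    (hj : aj < 1) (hij : 1 ≤ aj * ai) : gam (aj * ai) (aj * bi + bj) ≤ gam ai bi := by
  have haj : 0 < aj := pos_of_mul_pos_left (zero_lt_one.trans_le hij) (zero_le_one.trans hi)
  refine le_of_forall_between_le_coe h fun c hγi hγj => ?_
  have hci : c ≤ ai * c + bi := (gam_le_iff_of_one_le hi).1 hγi.le
  have hcj : c < aj * c + bj := (lt_gam_iff_of_lt_one hj).1 hγj
  exact (gam_le_iff_of_one_le hij).2 (hcj.le.trans (le_comp_apply_of_self_le_apply haj.le hci))

theorem right_le_gam_comp_of_one_le_of_mul_lt_one (haj : 0 ≤ aj) (h : gam ai bi < gam aj bj)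
    (hi : 1 ≤ ai) (hj : aj < 1) (hij : aj * ai < 1) : gam aj bj ≤ gam (aj * ai) (aj * bi + bj) := by
  refine le_of_forall_between_coe_le h fun c hγi hγj => ?_
  have hci : c ≤ ai * c + bi := (gam_le_iff_of_one_le hi).1 hγi.le
  have hcj : c < aj * c + bj := (lt_gam_iff_of_lt_one hj).1 hγj
  exact ((lt_gam_iff_of_lt_one hij).2
    (hcj.trans_le (le_comp_apply_of_self_le_apply haj hci))).le

end Composition

theorem stmt10_general (ai bi aj bj : ℝ) (haj : 0 ≤ aj) :
    (gam ai bi = gam aj bj → (aj * ai, aj * bi + bj) ≠ (1, 0) →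
      gam (aj * ai) (aj * bi + bj) = gam ai bi ∧
      gam (aj * ai) (aj * bi + bj) = gam aj bj) ∧
    (gam ai bi < gam aj bj → 1 ≤ ai → 1 ≤ aj →
      gam ai bi ≤ gam (aj * ai) (aj * bi + bj) ∧
      gam (aj * ai) (aj * bi + bj) ≤ gam aj bj) ∧
    (gam ai bi < gam aj bj → ai < 1 → aj < 1 →
      gam ai bi ≤ gam (aj * ai) (aj * bi + bj) ∧
      gam (aj * ai) (aj * bi + bj) ≤ gam aj bj) ∧
    (gam ai bi < gam aj bj → ai < 1 → 1 ≤ aj → 1 ≤ ai * aj →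
      gam aj bj ≤ gam (aj * ai) (aj * bi + bj)) ∧
    (gam ai bi < gam aj bj → ai < 1 → 1 ≤ aj → ai * aj < 1 →
      gam (aj * ai) (aj * bi + bj) ≤ gam ai bi) ∧
    (gam ai bi < gam aj bj → 1 ≤ ai → aj < 1 → 1 ≤ ai * aj →
      gam (aj * ai) (aj * bi + bj) ≤ gam ai bi) ∧
    (gam ai bi < gam aj bj → 1 ≤ ai → aj < 1 → ai * aj < 1 →
      gam aj bj ≤ gam (aj * ai) (aj * bi + bj)) := by
  rw [mul_comm ai aj]
  exact ⟨fun h hne => ⟨gam_comp_eq rfl h.symm hne, gam_comp_eq h rfl hne⟩,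
    fun h hi hj => ⟨left_le_gam_comp_of_one_le h.le hi hj, gam_comp_le_right_of_one_le h.le hi hj⟩,
    fun h hi hj =>
      ⟨left_le_gam_comp_of_lt_one haj h.le hi hj, gam_comp_le_right_of_lt_one haj h.le hi hj⟩,
    right_le_gam_comp_of_lt_one_of_one_le_mul,
    gam_comp_le_left_of_lt_one_of_mul_lt_one,
    gam_comp_le_left_of_one_le_of_one_le_mul,
    right_le_gam_comp_of_one_le_of_mul_lt_one haj⟩

/-- Relations between `γ(fᵢ)`, `γ(fⱼ)` and `γ(fⱼ ∘ fᵢ)` for monotone nondecreasing,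
non-identity linear functions `fᵢ(x) = aᵢx + bᵢ`, `fⱼ(x) = aⱼx + bⱼ`; note
`fⱼ ∘ fᵢ (x) = (aⱼ aᵢ) x + (aⱼ bᵢ + bⱼ)`. -/
theorem stmt10 (ai bi aj bj : ℝ) (hai : 0 ≤ ai) (haj : 0 ≤ aj)
    (hnidi : (ai, bi) ≠ (1, 0)) (hnidj : (aj, bj) ≠ (1, 0)) :
    (gam ai bi = gam aj bj → (aj * ai, aj * bi + bj) ≠ (1, 0) →
      gam (aj * ai) (aj * bi + bj) = gam ai bi ∧
      gam (aj * ai) (aj * bi + bj) = gam aj bj) ∧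
    (gam ai bi < gam aj bj → 1 ≤ ai → 1 ≤ aj →
      gam ai bi ≤ gam (aj * ai) (aj * bi + bj) ∧
      gam (aj * ai) (aj * bi + bj) ≤ gam aj bj) ∧
    (gam ai bi < gam aj bj → ai < 1 → aj < 1 →
      gam ai bi ≤ gam (aj * ai) (aj * bi + bj) ∧
      gam (aj * ai) (aj * bi + bj) ≤ gam aj bj) ∧
    (gam ai bi < gam aj bj → ai < 1 → 1 ≤ aj → 1 ≤ ai * aj →
      gam aj bj ≤ gam (aj * ai) (aj * bi + bj)) ∧
    (gam ai bi < gam aj bj → ai < 1 → 1 ≤ aj → ai * aj < 1 →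
      gam (aj * ai) (aj * bi + bj) ≤ gam ai bi) ∧
    (gam ai bi < gam aj bj → 1 ≤ ai → aj < 1 → 1 ≤ ai * aj →
      gam (aj * ai) (aj * bi + bj) ≤ gam ai bi) ∧
    (gam ai bi < gam aj bj → 1 ≤ ai → aj < 1 → ai * aj < 1 →
      gam aj bj ≤ gam (aj * ai) (aj * bi + bj)) :=
  stmt10_general ai bi aj bj haj
end

section
/- Let c ∈ ℝ and let f_i(x) = a_i x + b_i (i ∈ [n]) be monotone nondecreasing linear functions, none of which is the identity (a_i ≥ 0 and (a_i, b_i) ≠ (1, 0)). Then there exists a permutation σ of [n] that is optimal for the maximum total composition ordering problem ((f_i)_{i∈[n]}, c) and such that at most two indices i with 1 ≤ i ≤ n−1 satisfy δ(f_{σ(i)}) · δ(f_{σ(i+1)}) = −1. -/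
/-!
Cut an optimal ordering into blocks, each consisting of functions with slope at least `1` or of
functions with slope less than `1`, using as few blocks as possible among all optimal orderings.
Neighbouring blocks are then of different type, and an ordering in which two blocks of equal type
are adjacent is strictly worse, since merging them would save a block.

For three consecutive blocks, composing to linear functions with slopes `a₁, a₂, a₃`, either
exchange of neighbours makes the outer two adjacent and so is strictly worse, while moving an outer
block across the other two is at least not better. The gain of one linear function over another by
being applied first is a determinant of the vectors `(b, 1 - a)`, and the linear relation between
three vectors in the plane turns these inequalities into `1 ≤ a₁ a₂ a₃` if the middle block has
slope at least `1`, and `a₁ a₂ a₃ ≤ 1` otherwise.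

Four blocks are impossible: comparing `a₁ a₂ a₃` with `a₂ a₃ a₄` would order `a₁` and `a₄` against
their types. Three blocks have at most two changes of type.
-/

section Exchange

variable {K : Type*}

/-- Applying `f`, then `g`, then `h` at `x` is strictly better than exchanging two neighbours, and
at least as good as moving the first or the last function to the other end. -/
structure BeatsExchanges [Preorder K] (f g h : K → K) (x : K) : Prop where
  swap_left : h (f (g x)) < h (g (f x))
  swap_right : g (h (f x)) < h (g (f x))
  rotate_left : f (h (g x)) ≤ h (g (f x))
  rotate_right : g (f (h x)) ≤ h (g (f x))

/-- The gain of applying `x ↦ a x + b` before `x ↦ a' x + b'` rather than after it; it is the same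
at every starting point `x`. -/
def exchangeGain [CommRing K] (a b a' b' : K) : K := b' * (1 - a) - b * (1 - a')

variable [CommRing K]

lemma exchangeGain_cyclic (a₁ b₁ a₂ b₂ a₃ b₃ : K) :
    exchangeGain a₂ b₂ a₃ b₃ * (1 - a₁) + exchangeGain a₃ b₃ a₁ b₁ * (1 - a₂) +
      exchangeGain a₁ b₁ a₂ b₂ * (1 - a₃) = 0 := by
  simp only [exchangeGain]
  ring

variable [LinearOrder K] [IsStrictOrderedRing K] {a₁ b₁ a₂ b₂ a₃ b₃ x : K}

namespace BeatsExchanges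

variable (h : BeatsExchanges (a₁ * · + b₁) (a₂ * · + b₂) (a₃ * · + b₃) x)

include h

lemma exchangeGain_left_pos (h₃ : 0 ≤ a₃) : 0 < exchangeGain a₁ b₁ a₂ b₂ := by
  refine pos_of_mul_pos_right (a := a₃) ?_ h₃
  rw [exchangeGain]
  linarith [h.swap_left]

lemma exchangeGain_right_pos : 0 < exchangeGain a₂ b₂ a₃ b₃ := by
  rw [exchangeGain]
  linarith [h.swap_right]

lemma exchangeGain_outer_le : exchangeGain a₃ b₃ a₁ b₁ ≤ a₃ * exchangeGain a₁ b₁ a₂ b₂ := by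
  simp only [exchangeGain]
  linarith [h.rotate_left]

lemma mul_exchangeGain_outer_le :
    a₂ * exchangeGain a₃ b₃ a₁ b₁ ≤ exchangeGain a₂ b₂ a₃ b₃ := by
  simp only [exchangeGain]
  linarith [h.rotate_right]

lemma one_le_mul_of_lt_one (h₁ : a₁ < 1) (h₂ : 1 ≤ a₂) (h₃ : 0 ≤ a₃) (h₃' : a₃ < 1) :
    1 ≤ a₁ * a₂ * a₃ := by
  have cyclic := exchangeGain_cyclic a₁ b₁ a₂ b₂ a₃ b₃
  have left_pos := mul_pos (h.exchangeGain_left_pos h₃) (sub_pos.2 h₃')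
  have right_pos := mul_pos h.exchangeGain_right_pos (sub_pos.2 h₁)
  have outer_pos : 0 < exchangeGain a₃ b₃ a₁ b₁ :=
    pos_of_mul_pos_left (b := a₂ - 1) (by linarith) (by linarith)
  have outer_le := mul_le_mul_of_nonneg_right h.exchangeGain_outer_le (sub_nonneg.2 h₃'.le)
  have mul_outer_le := mul_le_mul_of_nonneg_left h.mul_exchangeGain_outer_le
    (mul_nonneg h₃ (sub_nonneg.2 h₁.le))
  have : 0 ≤ exchangeGain a₃ b₃ a₁ b₁ * (a₁ * a₂ * a₃ - 1) := by
    linear_combination outer_le + mul_outer_le + a₃ * cyclic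
  exact sub_nonneg.1 (nonneg_of_mul_nonneg_right this outer_pos)

lemma mul_le_one_of_one_le (h₁ : 1 ≤ a₁) (h₂ : a₂ < 1) (h₃ : 1 ≤ a₃) :
    a₁ * a₂ * a₃ ≤ 1 := by
  have h₃' : 0 ≤ a₃ := zero_le_one.trans h₃
  have cyclic := exchangeGain_cyclic a₁ b₁ a₂ b₂ a₃ b₃
  have left_pos := h.exchangeGain_left_pos h₃'
  have right_pos := h.exchangeGain_right_pos
  have left_nonneg := mul_nonneg left_pos.le (sub_nonneg.2 h₃)
  have right_nonneg := mul_nonneg right_pos.le (sub_nonneg.2 h₁)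
  have outer_nonneg : 0 ≤ exchangeGain a₃ b₃ a₁ b₁ :=
    nonneg_of_mul_nonneg_left (b := 1 - a₂) (by linarith) (sub_pos.2 h₂)
  rcases outer_nonneg.eq_or_lt with outer_zero | outer_pos
  · rw [← outer_zero] at cyclic
    obtain rfl : a₁ = 1 := h₁.antisymm' (le_of_mul_le_mul_left (by linarith) right_pos)
    obtain rfl : a₃ = 1 := h₃.antisymm' (le_of_mul_le_mul_left (by linarith) left_pos)
    simpa using h₂.le
  · have outer_le := mul_le_mul_of_nonneg_right h.exchangeGain_outer_le (sub_nonneg.2 h₃)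
    have mul_outer_le := mul_le_mul_of_nonneg_left h.mul_exchangeGain_outer_le
      (mul_nonneg h₃' (sub_nonneg.2 h₁))
    have : 0 ≤ exchangeGain a₃ b₃ a₁ b₁ * (1 - a₁ * a₂ * a₃) := by
      linear_combination outer_le + mul_outer_le - a₃ * cyclic
    exact sub_nonneg.1 (nonneg_of_mul_nonneg_right this outer_pos)

end BeatsExchanges

end Exchange

lemma one_lt_mul_of_one_le_mul {K : Type*} [Semiring K] [LinearOrder K] [IsStrictOrderedRing K]
    {m y z : K} (hm : 0 ≤ m) (hy : y < 1) (hz : 1 ≤ z) (h : 1 ≤ m * y) : 1 < m * z := by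
  have hm' : 0 < m := hm.lt_of_ne' fun h₀ => by simp [h₀, zero_lt_one.not_ge] at h
  calc 1 ≤ m * y := h
    _ < m * 1 := mul_lt_mul_of_pos_left hy hm'
    _ ≤ m * z := mul_le_mul_of_nonneg_left hz hm

section Compose

variable {ι K : Type*} [CommSemiring K]

/-- The value at `x` of the composition of the functions `x ↦ a i * x + b i` along a list of
indices, the function at the head being applied first. -/
def compose (a b : ι → K) (l : List ι) (x : K) : K :=
  l.foldl (fun y i => a i * y + b i) x

variable {a b : ι → K}

lemma compose_append (l m : List ι) (x : K) :
    compose a b (l ++ m) x = compose a b m (compose a b l x) :=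
  List.foldl_append

variable (a b) in
lemma exists_compose_eq (l : List ι) :
    ∃ q, compose a b l = ((l.map a).prod * · + q) := by
  induction l with
  | nil => exact ⟨0, funext fun x => by simp [compose]⟩
  | cons i l ih =>
    obtain ⟨q, hq⟩ := ih
    refine ⟨(l.map a).prod * b i + q, funext fun x => ?_⟩
    calc compose a b (i :: l) x = compose a b l (a i * x + b i) := rfl
      _ = ((i :: l).map a).prod * x + ((l.map a).prod * b i + q) := by
        simp only [hq, List.map_cons, List.prod_cons]
        ring

variable [LinearOrder K] [IsStrictOrderedRing K]

lemma prod_map_nonneg (ha : ∀ i, 0 ≤ a i) (l : List ι) : 0 ≤ (l.map a).prod :=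
  List.prod_nonneg (List.forall_mem_map.2 fun i _ => ha i)

lemma strictMono_compose_of_ne (ha : ∀ i, 0 ≤ a i) {l : List ι} {x y : K}
    (h : compose a b l x ≠ compose a b l y) : StrictMono (compose a b l) := by
  obtain ⟨q, hq⟩ := exists_compose_eq a b l
  have hpos : 0 < (l.map a).prod :=
    (prod_map_nonneg ha l).lt_of_ne' fun h₀ => by simp [hq, h₀] at h
  rw [hq]
  exact (strictMono_mul_left_of_pos hpos).add_const q

end Compose

section Blocks

variable {ι K : Type*}

section Block

variable [Monoid K] [Preorder K] {a : ι → K}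

/-- A block: all functions indexed by `X` lie on the same side of slope `1`. That side is encoded as
the one of their composition, whose slope is the product of theirs. -/
def IsBlock (a : ι → K) (X : List ι) : Prop :=
  ∀ i ∈ X, (1 ≤ a i ↔ 1 ≤ (X.map a).prod)

lemma isBlock_singleton (i : ι) : IsBlock a [i] := by
  simp [IsBlock]

end Block

section OptimalBlocking

variable [CommSemiring K] [LinearOrder K] {a b : ι → K} {c : K}

/-- A sequence of blocks which, concatenated, is an optimal ordering of its indices, and which has
the fewest blocks among all such sequences on the same indices. -/
structure IsOptimalBlocking (a b : ι → K) (c : K) (L : List (List ι)) : Prop where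
  isBlock : ∀ X ∈ L, IsBlock a X
  compose_le : ∀ l : List ι, l.Perm L.flatten → compose a b l c ≤ compose a b L.flatten c
  compose_lt : ∀ M : List (List ι), (∀ X ∈ M, IsBlock a X) → M.flatten.Perm L.flatten →
    M.length < L.length → compose a b M.flatten c < compose a b L.flatten c

variable (a b c) in
lemma exists_isOptimalBlocking (l₀ : List ι) :
    ∃ L, L.flatten.Perm l₀ ∧ IsOptimalBlocking a b c L := by
  classical
  obtain ⟨l, hl, hmax⟩ := l₀.permutations.toFinset.exists_max_image (compose a b · c)
    ⟨l₀, by simp⟩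
  simp only [List.mem_toFinset, List.mem_permutations] at hl hmax
  let optimal : Set (List (List ι)) := {L | (∀ X ∈ L, IsBlock a X) ∧ L.flatten.Perm l₀ ∧
    compose a b L.flatten c = compose a b l c}
  have flatten_singletons : (l.map ([·])).flatten = l := List.flatMap_singleton' l
  have singletons_mem : l.map ([·]) ∈ optimal :=
    ⟨List.forall_mem_map.2 fun i _ => isBlock_singleton i, by rwa [flatten_singletons],
      by rw [flatten_singletons]⟩
  obtain ⟨L, ⟨hblock, hperm, hval⟩, hmin⟩ :=
    exists_minimalFor_of_wellFoundedLT (· ∈ optimal) List.length ⟨_, singletons_mem⟩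
  have hopt (m : List ι) (hm : m.Perm L.flatten) : compose a b m c ≤ compose a b L.flatten c :=
    (hmax m (hm.trans hperm)).trans_eq hval.symm
  refine ⟨L, hperm, hblock, hopt, fun M hM hML hlen => (hopt _ hML).lt_of_ne fun heq => ?_⟩
  exact hlen.not_ge (hmin ⟨hM, hML.trans hperm, heq.trans hval⟩ hlen.le)

variable [IsStrictOrderedRing K]

lemma IsBlock.append (ha : ∀ i, 0 ≤ a i) {X Y : List ι} (hX : IsBlock a X) (hY : IsBlock a Y)
    (h : 1 ≤ (X.map a).prod ↔ 1 ≤ (Y.map a).prod) : IsBlock a (X ++ Y) := by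
  have hprod : 1 ≤ ((X ++ Y).map a).prod ↔ 1 ≤ (X.map a).prod := by
    rw [List.map_append, List.prod_append]
    by_cases hX₁ : 1 ≤ (X.map a).prod
    · exact iff_of_true (one_le_mul_of_one_le_of_one_le hX₁ (h.1 hX₁)) hX₁
    · refine iff_of_false (not_le.2 ?_) hX₁
      exact mul_lt_one_of_nonneg_of_lt_one_left (prod_map_nonneg ha X) (not_le.1 hX₁)
        (not_le.1 (h.not.1 hX₁)).le
  intro i hi
  rw [hprod]
  rcases List.mem_append.1 hi with hi | hi
  · exact hX i hi
  · exact (hY i hi).trans h.symm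

namespace IsOptimalBlocking

variable {E R L : List (List ι)} {X Y Z : List ι}

lemma compose_lt_of_mergeable (ha : ∀ i, 0 ≤ a i) (hL : IsOptimalBlocking a b c L)
    (hperm : (E ++ X :: Y :: R).Perm L) (h : 1 ≤ (X.map a).prod ↔ 1 ≤ (Y.map a).prod) :
    compose a b (E ++ X :: Y :: R).flatten c < compose a b L.flatten c := by
  have hblock : ∀ W ∈ E ++ X :: Y :: R, IsBlock a W :=
    fun W hW => hL.isBlock W (hperm.subset hW)
  have hflatten : (E ++ (X ++ Y) :: R).flatten = (E ++ X :: Y :: R).flatten := by simp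
  have hmerged : ∀ W ∈ E ++ (X ++ Y) :: R, IsBlock a W := by
    simp only [List.forall_mem_append, List.forall_mem_cons] at hblock ⊢
    obtain ⟨hE, hX, hY, hR⟩ := hblock
    exact ⟨hE, hX.append ha hY h, hR⟩
  rw [← hflatten]
  refine hL.compose_lt _ hmerged (hflatten ▸ hperm.flatten) ?_
  simp [← hperm.length_eq]

lemma one_le_prod_iff_not (ha : ∀ i, 0 ≤ a i) (hL : IsOptimalBlocking a b c (E ++ X :: Y :: R)) :
    1 ≤ (Y.map a).prod ↔ ¬ 1 ≤ (X.map a).prod := by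
  have : ¬ (1 ≤ (X.map a).prod ↔ 1 ≤ (Y.map a).prod) :=
    fun h => (hL.compose_lt_of_mergeable ha .rfl h).false
  tauto

lemma beatsExchanges (ha : ∀ i, 0 ≤ a i) (hL : IsOptimalBlocking a b c (E ++ X :: Y :: Z :: R)) :
    BeatsExchanges (compose a b X) (compose a b Y) (compose a b Z)
      (compose a b E.flatten c) := by
  have hXY := hL.one_le_prod_iff_not ha
  have hYZ : 1 ≤ (Z.map a).prod ↔ ¬ 1 ≤ (Y.map a).prod :=
    one_le_prod_iff_not (E := E ++ [X]) (R := R) (c := c) (b := b) ha (by simpa using hL)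
  have hXZ : 1 ≤ (X.map a).prod ↔ 1 ≤ (Z.map a).prod := by tauto
  have swap_left := hL.compose_lt_of_mergeable (E := E ++ [Y]) (R := R) ha
    (by simpa using (List.Perm.swap X Y (Z :: R)).append_left E) hXZ
  have swap_right := hL.compose_lt_of_mergeable (E := E) (R := Y :: R) ha
    (((List.Perm.swap Y Z R).cons X).append_left E) hXZ
  have rotate_left := hL.compose_le (E ++ Y :: Z :: X :: R).flatten
    ((List.perm_middle (l₁ := [Y, Z])).append_left E).flatten
  have rotate_right := hL.compose_le (E ++ Z :: X :: Y :: R).flatten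
    ((List.perm_middle (l₁ := [X, Y])).symm.append_left E).flatten
  simp only [List.flatten_append, List.flatten_cons, List.flatten_nil, List.append_nil,
    List.append_assoc, compose_append] at swap_left swap_right rotate_left rotate_right
  have hR : StrictMono (compose a b R.flatten) := strictMono_compose_of_ne ha swap_left.ne
  exact ⟨hR.lt_iff_lt.1 swap_left, hR.lt_iff_lt.1 swap_right, hR.le_iff_le.1 rotate_left,
    hR.le_iff_le.1 rotate_right⟩

end IsOptimalBlocking

end OptimalBlocking

namespace IsOptimalBlocking

variable [CommRing K] [LinearOrder K] [IsStrictOrderedRing K] {a b : ι → K} {c : K}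
  {E R L : List (List ι)} {X Y Z : List ι}

lemma one_le_prod_of_lt_one (ha : ∀ i, 0 ≤ a i)
    (hL : IsOptimalBlocking a b c (E ++ X :: Y :: Z :: R)) (hX : (X.map a).prod < 1)
    (hY : 1 ≤ (Y.map a).prod) (hZ : (Z.map a).prod < 1) :
    1 ≤ (X.map a).prod * (Y.map a).prod * (Z.map a).prod := by
  have h := hL.beatsExchanges ha
  obtain ⟨p, hp⟩ := exists_compose_eq a b X
  obtain ⟨q, hq⟩ := exists_compose_eq a b Y
  obtain ⟨r, hr⟩ := exists_compose_eq a b Z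
  rw [hp, hq, hr] at h
  exact h.one_le_mul_of_lt_one hX hY (prod_map_nonneg ha Z) hZ

lemma prod_le_one_of_one_le (ha : ∀ i, 0 ≤ a i)
    (hL : IsOptimalBlocking a b c (E ++ X :: Y :: Z :: R)) (hX : 1 ≤ (X.map a).prod)
    (hY : (Y.map a).prod < 1) (hZ : 1 ≤ (Z.map a).prod) :
    (X.map a).prod * (Y.map a).prod * (Z.map a).prod ≤ 1 := by
  have h := hL.beatsExchanges ha
  obtain ⟨p, hp⟩ := exists_compose_eq a b X
  obtain ⟨q, hq⟩ := exists_compose_eq a b Y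
  obtain ⟨r, hr⟩ := exists_compose_eq a b Z
  rw [hp, hq, hr] at h
  exact h.mul_le_one_of_one_le hX hY hZ

lemma length_le_three (ha : ∀ i, 0 ≤ a i) (hL : IsOptimalBlocking a b c L) : L.length ≤ 3 := by
  by_contra! hlen
  obtain ⟨A, B, C, D, R, rfl⟩ : ∃ A B C D R, L = A :: B :: C :: D :: R := by
    match L, hlen with
    | A :: B :: C :: D :: R, _ => exact ⟨A, B, C, D, R, rfl⟩
  have hABC : IsOptimalBlocking a b c ([] ++ A :: B :: C :: D :: R) := hL
  have hBCD : IsOptimalBlocking a b c ([A] ++ B :: C :: D :: R) := hL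
  have hCD : IsOptimalBlocking a b c ([A, B] ++ C :: D :: R) := hL
  have hBC : 0 ≤ (B.map a).prod * (C.map a).prod :=
    mul_nonneg (prod_map_nonneg ha B) (prod_map_nonneg ha C)
  have hAB_iff := hABC.one_le_prod_iff_not ha
  have hBC_iff := hBCD.one_le_prod_iff_not ha
  have hCD_iff := hCD.one_le_prod_iff_not ha
  rcases lt_or_ge (A.map a).prod 1 with hA | hA
  · have hB : 1 ≤ (B.map a).prod := hAB_iff.2 hA.not_ge
    have hC : (C.map a).prod < 1 := not_le.1 fun hC => hBC_iff.1 hC hB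
    have hD : 1 ≤ (D.map a).prod := hCD_iff.2 hC.not_ge
    have prod_ABC := hABC.one_le_prod_of_lt_one ha hA hB hC
    have prod_BCD := hBCD.prod_le_one_of_one_le ha hB hC hD
    rw [mul_assoc, mul_comm] at prod_ABC
    exact prod_BCD.not_gt (one_lt_mul_of_one_le_mul hBC hA hD prod_ABC)
  · have hB : (B.map a).prod < 1 := not_le.1 fun hB => hAB_iff.1 hB hA
    have hC : 1 ≤ (C.map a).prod := hBC_iff.2 hB.not_ge
    have hD : (D.map a).prod < 1 := not_le.1 fun hD => hCD_iff.1 hD hC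
    have prod_ABC := hABC.prod_le_one_of_one_le ha hA hB hC
    have prod_BCD := hBCD.one_le_prod_of_lt_one ha hB hC hD
    rw [mul_assoc, mul_comm] at prod_ABC
    exact prod_ABC.not_gt (one_lt_mul_of_one_le_mul hBC hD hA prod_BCD)

end IsOptimalBlocking

end Blocks

section SlopeChanges

variable {ι K : Type*} [Monoid K] [Preorder K] {a : ι → K}

/-- The positions `j` such that exactly one of the functions at positions `j` and `j + 1` of the
ordering `l` has slope at least `1`. -/
def slopeChanges (a : ι → K) (l : List ι) : Set ℕ :=
  {j | ∃ h : j + 1 < l.length, ¬ (1 ≤ a l[j] ↔ 1 ≤ a l[j + 1])}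

lemma IsBlock.slopeChanges_eq_empty {X : List ι} (hX : IsBlock a X) : slopeChanges a X = ∅ :=
  Set.eq_empty_of_forall_notMem fun _ ⟨_, hj⟩ =>
    hj ((hX _ (List.getElem_mem _)).trans (hX _ (List.getElem_mem _)).symm)

lemma IsBlock.slopeChanges_append_subset {X : List ι} (hX : IsBlock a X) (l : List ι) :
    slopeChanges a (X ++ l) ⊆ insert (X.length - 1) ((X.length + ·) '' slopeChanges a l) := by
  rintro j ⟨hj, hchange⟩
  rcases lt_trichotomy (j + 1) X.length with hlt | heq | hgt
  · have hmem : j ∈ slopeChanges a X :=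
      ⟨hlt, by rwa [List.getElem_append_left (by omega), List.getElem_append_left hlt] at hchange⟩
    simp [hX.slopeChanges_eq_empty] at hmem
  · exact Or.inl (by omega)
  · obtain ⟨k, rfl⟩ : ∃ k, j = X.length + k := Nat.exists_eq_add_of_le (by omega)
    refine Or.inr ⟨k, ⟨?_, ?_⟩, rfl⟩
    · rw [List.length_append] at hj
      omega
    · simpa [List.getElem_append_right, Nat.add_assoc] using hchange

lemma encard_slopeChanges_flatten_le (L : List (List ι)) (hL : ∀ X ∈ L, IsBlock a X) :
    (slopeChanges a L.flatten).encard ≤ (L.length - 1 : ℕ) := by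
  induction L with
  | nil => simp [slopeChanges]
  | cons X L ih =>
    obtain ⟨hX, hL⟩ := List.forall_mem_cons.1 hL
    cases L with
    | nil => simp [hX.slopeChanges_eq_empty]
    | cons Y L =>
      calc (slopeChanges a (X ++ (Y :: L).flatten)).encard
          ≤ ((X.length + ·) '' slopeChanges a (Y :: L).flatten).encard + 1 :=
            (Set.encard_le_encard (hX.slopeChanges_append_subset _)).trans
              (Set.encard_insert_le _ _)
        _ ≤ (slopeChanges a (Y :: L).flatten).encard + 1 := by
            exact add_le_add_left (Set.encard_image_le _ _) 1
        _ ≤ (L.length : ℕ∞) + 1 := by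
            gcongr
            exact ih hL

lemma natCard_le_of_encard_slopeChanges_le {n k : ℕ} {σ : Fin n → ι}
    (h : (slopeChanges a ((List.finRange n).map σ)).encard ≤ k) :
    Nat.card {j : Fin n // ∃ h : j.val + 1 < n,
      ¬ (1 ≤ a (σ j) ↔ 1 ≤ a (σ ⟨j.val + 1, h⟩))} ≤ k := by
  have image_subset : Fin.val '' {j : Fin n | ∃ h : j.val + 1 < n,
      ¬ (1 ≤ a (σ j) ↔ 1 ≤ a (σ ⟨j.val + 1, h⟩))} ⊆ slopeChanges a ((List.finRange n).map σ) := by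
    rintro _ ⟨j, ⟨hj, hchange⟩, rfl⟩
    exact ⟨by simpa using hj, by simpa using hchange⟩
  have encard_le := (Set.encard_le_encard image_subset).trans h
  rw [Fin.val_injective.encard_image] at encard_le
  exact (Set.encard_le_coe_iff_finite_ncard_le.1 encard_le).2

end SlopeChanges

lemma exists_perm_map_finRange_eq {n : ℕ} {l : List (Fin n)} (hl : l.Perm (List.finRange n)) :
    ∃ σ : Equiv.Perm (Fin n), (List.finRange n).map σ = l := by
  have hlen : n = l.length := by simpa using hl.length_eq.symm
  have hnodup : l.Nodup := hl.nodup_iff.2 (List.nodup_finRange n)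
  have hmem (i : Fin n) : i ∈ l := hl.mem_iff.2 (List.mem_finRange i)
  exact ⟨(finCongr hlen).trans (hnodup.getEquivOfForallMemList l hmem),
    List.ext_getElem (by simpa using hlen) fun i _ _ => by simp⟩

lemma del_mul_del_eq_neg_one_iff {x y : ℝ} : del x * del y = -1 ↔ ¬ (1 ≤ x ↔ 1 ≤ y) := by
  by_cases hx : 1 ≤ x <;> by_cases hy : 1 ≤ y <;> simp [del, hx, hy]

lemma compSeq_eq_compose {n : ℕ} (a b : Fin n → ℝ) (σ : Fin n → Fin n) (c : ℝ) :
    compSeq (fun i x => a i * x + b i) σ n c = compose a b ((List.finRange n).map σ) c := by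
  simp [compSeq, compose, List.take_of_length_le]

theorem stmt13_general {K : Type*} [CommRing K] [LinearOrder K] [IsStrictOrderedRing K] (n : ℕ)
    (c : K) (a b : Fin n → K) (ha : ∀ i, 0 ≤ a i) :
    ∃ σ : Equiv.Perm (Fin n),
      (∀ τ : Equiv.Perm (Fin n), compose a b ((List.finRange n).map τ) c ≤
        compose a b ((List.finRange n).map σ) c) ∧
      Nat.card {j : Fin n // ∃ h : j.val + 1 < n,
        ¬ (1 ≤ a (σ j) ↔ 1 ≤ a (σ ⟨j.val + 1, h⟩))} ≤ 2 := by
  obtain ⟨L, hperm, hL⟩ := exists_isOptimalBlocking a b c (List.finRange n)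
  obtain ⟨σ, hσ⟩ := exists_perm_map_finRange_eq hperm
  refine ⟨σ, fun τ => ?_, natCard_le_of_encard_slopeChanges_le ?_⟩
  · rw [hσ]
    exact hL.compose_le _ ((Equiv.Perm.map_finRange_perm τ).trans hperm.symm)
  · rw [hσ]
    calc (slopeChanges a L.flatten).encard
        ≤ (L.length - 1 : ℕ) := encard_slopeChanges_flatten_le L hL.isBlock
      _ ≤ (2 : ℕ) := Nat.cast_le.2 (Nat.sub_le_sub_right (hL.length_le_three ha) 1)

/-- There is an optimal permutation for the maximum total composition ordering problem
for monotone nondecreasing non-identity linear functions such that at most two adjacent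
positions have `δ(f_{σ(i)}) · δ(f_{σ(i+1)}) = -1`. -/
theorem stmt13 (n : ℕ) (c : ℝ) (a b : Fin n → ℝ) (ha : ∀ i, 0 ≤ a i)
    (hnid : ∀ i, (a i, b i) ≠ (1, 0)) :
    ∃ σ : Equiv.Perm (Fin n),
      (∀ τ : Equiv.Perm (Fin n),
        compSeq (fun i x => a i * x + b i) τ n c ≤
          compSeq (fun i x => a i * x + b i) σ n c) ∧
      Nat.card {j : Fin n // ∃ h : j.val + 1 < n,
        del (a (σ j)) * del (a (σ ⟨j.val + 1, h⟩)) = -1} ≤ 2 := by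
  simpa only [compSeq_eq_compose, del_mul_del_eq_neg_one_iff] using stmt13_general n c a b ha
end

section
/- Let f_i(x) = a_i x + b_i (i = 1, 2, 3) be monotone nondecreasing linear functions, none of which is the identity, with a_1, a_3 ≥ 1, 0 ≤ a_2 < 1, and a_1·a_2·a_3 ≥ 1. If γ(f_1) ≥ γ(f_2) ≥ γ(f_3), then for every x ∈ ℝ, f_3∘f_2∘f_1(x) ≤ max{ f_2∘f_1∘f_3(x), f_1∘f_3∘f_2(x) }. -/
section OrderedRing

variable {R : Type*} [CommRing R] [LinearOrder R] [IsStrictOrderedRing R]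

lemma comp_le_comp_swap_of_le_of_le {a b a' b' c : R} (ha : 1 ≤ a) (ha' : 1 ≤ a')
    (hc : c ≤ a * c + b) (hc' : a' * c + b' ≤ c) (x : R) :
    a * (a' * x + b') + b ≤ a' * (a * x + b) + b' := by
  have hf : 0 ≤ (a' - 1) * (a * c + b - c) :=
    mul_nonneg (sub_nonneg.mpr ha') (sub_nonneg.mpr hc)
  have hg : 0 ≤ (a - 1) * (c - (a' * c + b')) :=
    mul_nonneg (sub_nonneg.mpr ha) (sub_nonneg.mpr hc')
  linear_combination hf + hg

lemma comp_le_max_comp_of_fixedPoint {a₁ b₁ a₂ b₂ a₃ b₃ c : R}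
    (ha₁ : 1 ≤ a₁) (ha₃ : 1 ≤ a₃) (hprod : 1 ≤ a₁ * a₂ * a₃)
    (hc₁ : a₁ * c + b₁ ≤ c) (hc₂ : a₂ * c + b₂ = c) (hc₃ : c ≤ a₃ * c + b₃) (x : R) :
    a₃ * (a₂ * (a₁ * x + b₁) + b₂) + b₃ ≤
      max (a₂ * (a₁ * (a₃ * x + b₃) + b₁) + b₂)
        (a₁ * (a₃ * (a₂ * x + b₂) + b₃) + b₁) := by
  have ha₁₂ : 0 < a₁ * a₂ :=
    pos_of_mul_pos_left (zero_lt_one.trans_le hprod) (zero_le_one.trans ha₃)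
  have ha₂ : 0 ≤ a₂ := (pos_of_mul_pos_right ha₁₂ (zero_le_one.trans ha₁)).le
  rcases le_or_gt 1 (a₁ * a₂) with h₁₂ | h₁₂
  · have hc₂₁ : a₁ * a₂ * c + (a₂ * b₁ + b₂) ≤ c := by
      linear_combination mul_le_mul_of_nonneg_left hc₁ ha₂ + hc₂
    have hswap := comp_le_comp_swap_of_le_of_le ha₃ h₁₂ hc₃ hc₂₁ x
    exact le_max_of_le_left (by linear_combination hswap)
  · have ha₂' : a₂ < 1 := (le_mul_of_one_le_left ha₂ ha₁).trans_lt h₁₂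
    by_contra! hlt
    obtain ⟨h₂₁₃, h₁₃₂⟩ := max_lt_iff.mp hlt
    -- The weights `1 - a₁ * a₂` and `a₁ - 1` eliminate `b₃`.
    have hweighted : (1 - a₁ * a₂) * (a₁ * (a₃ * (a₂ * x + b₂) + b₃) + b₁ -
          (a₃ * (a₂ * (a₁ * x + b₁) + b₂) + b₃)) +
        (a₁ - 1) * (a₂ * (a₁ * (a₃ * x + b₃) + b₁) + b₂ -
          (a₃ * (a₂ * (a₁ * x + b₁) + b₂) + b₃)) =
        (1 - a₂) * (a₁ * a₂ * a₃ - 1) * (c - (a₁ * c + b₁)) := by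
      linear_combination (a₁ - 1) * (1 - a₁ * a₂ * a₃) * hc₂
    have hneg := mul_neg_of_pos_of_neg (sub_pos.mpr h₁₂) (sub_neg.mpr h₁₃₂)
    have hnonpos :=
      mul_nonpos_of_nonneg_of_nonpos (sub_nonneg.mpr ha₁) (sub_neg.mpr h₂₁₃).le
    have hnonneg : 0 ≤ (1 - a₂) * (a₁ * a₂ * a₃ - 1) * (c - (a₁ * c + b₁)) :=
      mul_nonneg (mul_nonneg (sub_nonneg.mpr ha₂'.le) (sub_nonneg.mpr hprod))
        (sub_nonneg.mpr hc₁)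
    exact (hnonneg.trans_eq hweighted.symm).not_gt (add_neg_of_neg_of_nonpos hneg hnonpos)

end OrderedRing

section Gam

variable {a b c : ℝ}

lemma gam_one_of_neg (hb : b < 0) : gam 1 b = ⊤ := by
  rw [gam, if_pos rfl, if_pos hb]

lemma gam_one_of_nonneg (hb : 0 ≤ b) : gam 1 b = ⊥ := by
  rw [gam, if_pos rfl, if_neg hb.not_gt]

lemma exists_fixedPoint_gam_eq (b : ℝ) (ha : a ≠ 1) : ∃ c : ℝ, a * c + b = c ∧ gam a b = c := by
  have hne : 1 - a ≠ 0 := sub_ne_zero.mpr ha.symm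
  refine ⟨b / (1 - a), ?_, if_neg ha⟩
  field_simp
  ring

lemma eq_one_of_gam_eq_top (h : gam a b = ⊤) : a = 1 := by
  by_contra ha
  obtain ⟨c, -, hc⟩ := exists_fixedPoint_gam_eq b ha
  exact EReal.coe_ne_top c (hc.symm.trans h)

lemma map_le_of_le_gam (ha : 1 ≤ a) (h : (c : EReal) ≤ gam a b) : a * c + b ≤ c := by
  rcases ha.eq_or_lt with rfl | ha
  · rcases lt_or_ge b 0 with hb | hb
    · linarith
    · rw [gam_one_of_nonneg hb, le_bot_iff] at h
      exact absurd h (EReal.coe_ne_bot c)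
  · obtain ⟨d, hd, hgam⟩ := exists_fixedPoint_gam_eq b ha.ne'
    rw [hgam, EReal.coe_le_coe_iff] at h
    linear_combination hd + mul_le_mul_of_nonneg_left h (sub_nonneg.mpr ha.le)

lemma le_map_of_gam_le (ha : 1 ≤ a) (h : gam a b ≤ c) : c ≤ a * c + b := by
  rcases ha.eq_or_lt with rfl | ha
  · rcases lt_or_ge b 0 with hb | hb
    · rw [gam_one_of_neg hb, top_le_iff] at h
      exact absurd h (EReal.coe_ne_top c)
    · linarith
  · obtain ⟨d, hd, hgam⟩ := exists_fixedPoint_gam_eq b ha.ne'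
    rw [hgam, EReal.coe_le_coe_iff] at h
    linear_combination -hd + mul_le_mul_of_nonneg_left h (sub_nonneg.mpr ha.le)

lemma comp_le_comp_swap_of_gam_le {a' b' : ℝ} (ha : 1 ≤ a) (ha' : 1 ≤ a')
    (h : gam a b ≤ gam a' b') (x : ℝ) :
    a * (a' * x + b') + b ≤ a' * (a * x + b) + b' := by
  rcases ha.eq_or_lt with rfl | ha
  · rcases lt_or_ge b 0 with hb | hb
    · rw [gam_one_of_neg hb, top_le_iff] at h
      rw [eq_one_of_gam_eq_top h]
      linarith
    · linear_combination le_mul_of_one_le_left hb ha'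
  · obtain ⟨c, hc, hgam⟩ := exists_fixedPoint_gam_eq b ha.ne'
    exact comp_le_comp_swap_of_le_of_le ha.le ha' hc.ge (map_le_of_le_gam ha' (hgam ▸ h)) x

end Gam

theorem stmt14_general (a1 b1 a2 b2 a3 b3 : ℝ)
    (ha1 : 1 ≤ a1) (ha3 : 1 ≤ a3) (hprod : 1 ≤ a1 * a2 * a3)
    (h21 : gam a2 b2 ≤ gam a1 b1) (h32 : gam a3 b3 ≤ gam a2 b2) (x : ℝ) :
    a3 * (a2 * (a1 * x + b1) + b2) + b3 ≤
      max (a2 * (a1 * (a3 * x + b3) + b1) + b2)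
        (a1 * (a3 * (a2 * x + b2) + b3) + b1) := by
  rcases le_or_gt 1 a2 with ha2 | ha2
  · apply le_max_of_le_left
    calc a3 * (a2 * (a1 * x + b1) + b2) + b3
        ≤ a2 * (a3 * (a1 * x + b1) + b3) + b2 :=
          comp_le_comp_swap_of_gam_le ha3 ha2 h32 (a1 * x + b1)
      _ ≤ a2 * (a1 * (a3 * x + b3) + b1) + b2 := by
          gcongr a2 * ?_ + b2
          exact comp_le_comp_swap_of_gam_le ha3 ha1 (h32.trans h21) x
  · obtain ⟨c, hc, hgam⟩ := exists_fixedPoint_gam_eq b2 ha2.ne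
    rw [hgam] at h21 h32
    exact comp_le_max_comp_of_fixedPoint ha1 ha3 hprod (map_le_of_le_gam ha1 h21) hc
      (le_map_of_gam_le ha3 h32) x

/-- For non-identity monotone linear `fᵢ(x) = aᵢx + bᵢ` with `a₁, a₃ ≥ 1`,
`0 ≤ a₂ < 1`, `a₁a₂a₃ ≥ 1` and `γ(f₁) ≥ γ(f₂) ≥ γ(f₃)`:
`f₃∘f₂∘f₁ ≤ max (f₂∘f₁∘f₃) (f₁∘f₃∘f₂)` pointwise. -/
theorem stmt14 (a1 b1 a2 b2 a3 b3 : ℝ)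
    (ha1 : 1 ≤ a1) (ha3 : 1 ≤ a3) (ha2 : 0 ≤ a2) (ha2' : a2 < 1)
    (hprod : 1 ≤ a1 * a2 * a3)
    (hn1 : (a1, b1) ≠ (1, 0)) (hn2 : (a2, b2) ≠ (1, 0)) (hn3 : (a3, b3) ≠ (1, 0))
    (h21 : gam a2 b2 ≤ gam a1 b1) (h32 : gam a3 b3 ≤ gam a2 b2) :
    ∀ x : ℝ,
      a3 * (a2 * (a1 * x + b1) + b2) + b3 ≤
        max (a2 * (a1 * (a3 * x + b3) + b1) + b2)
          (a1 * (a3 * (a2 * x + b2) + b3) + b1) :=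
  stmt14_general a1 b1 a2 b2 a3 b3 ha1 ha3 hprod h21 h32
end

section
/- Let c ∈ ℝ and let f_i(x) = a_i x + b_i (i ∈ [n]) be monotone nondecreasing linear functions, none of which is the identity (a_i ≥ 0 and (a_i, b_i) ≠ (1, 0)). If ∏_{i=1}^n a_i ≥ 1, then there exists a permutation σ of [n] that is optimal for the maximum total composition ordering problem ((f_i)_{i∈[n]}, c) and integers 0 ≤ s ≤ t ≤ n such that δ(f_{σ(i)}) = −1 for all i ∈ {1,…,s} ∪ {t+1,…,n}, δ(f_{σ(i)}) = +1 for all i ∈ {s+1,…,t}, γ(f_{σ(t+1)}) ≤ ⋯ ≤ γ(f_{σ(n)}) ≤ γ(f_{σ(1)}) ≤ ⋯ ≤ γ(f_{σ(s)}), and γ(f_{σ(s+1)}) ≤ ⋯ ≤ γ(f_{σ(t)}). -/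
/-!
Attach to the map `x ↦ a x + b` the plane vector `(1 - a, b)`. Contracting maps (`δ = -1`) have
their vector in the open right half-plane, the others in the closed left half-plane, and within
either half `γ` is the slope of the vector, increasing counterclockwise. Exchanging two adjacent
blocks of a composition changes its value by a positive multiple of the cross product of their
vectors, so in an optimal order every block turns counterclockwise into the next one.

Let `V` be the vector of the whole composition; it lies in the closed left half-plane because the
product of the slopes is at least `1`. If `V ≠ 0`, every prefix lies to the right of `V` and every
suffix to its left. Choose, among all optimal orders, the one that is lexicographically least for
the counterclockwise order starting from the direction `-V`. By the Plücker relation between four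
plane vectors it has no adjacent inversion, so it is sorted; as the cut `-V` lies in the closed
right half-plane, this is the asserted shape.

If `V = 0`, the whole composition is the identity, and so is each of its rotations. Some contracting
map `m` can therefore be put last, and the remaining maps compose to `m⁻¹`, whose cut is the
direction of `m` itself. If there is no contracting map, no cut is needed.
-/

section Lists

variable {ι α β : Type*}

lemma append_swap_perm (P S T Q : List α) : (P ++ T ++ S ++ Q).Perm (P ++ S ++ T ++ Q) := by
  simpa only [List.append_assoc] using (List.perm_append_comm_assoc T S Q).append_left P

lemma exists_map_eq_of_perm_map {f : β → α} {l : List α} {l₀ : List β}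
    (h : l.Perm (l₀.map f)) : ∃ l' : List β, l'.Perm l₀ ∧ l'.map f = l := by
  have hrel : List.Forall₂ (fun x i => x = f i) (l₀.map f) l₀ := by
    simp [List.forall₂_map_left_iff]
  obtain ⟨l', hl', hp⟩ := List.perm_comp_forall₂ h hrel
  rw [← List.forall₂_map_right_iff, List.forall₂_eq_eq_eq] at hl'
  exact ⟨l', hp, hl'.symm⟩

lemma exists_ofFn_perm_eq {n : ℕ} {l : List (Fin n)} (h : l.Perm (List.finRange n)) :
    ∃ σ : Equiv.Perm (Fin n), List.ofFn σ = l := by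
  have hlen : n = l.length := by rw [h.length_eq, List.length_finRange]
  have hnodup : l.Nodup := h.nodup_iff.2 (List.nodup_finRange n)
  have hmem (i : Fin n) : i ∈ l := h.mem_iff.2 (List.mem_finRange i)
  refine ⟨(finCongr hlen).trans (hnodup.getEquivOfForallMemList l hmem), ?_⟩
  exact (List.ofFn_congr hlen.symm l.get).symm.trans (List.ofFn_get l)

lemma exists_ofFn_comp_perm_eq {n : ℕ} {m : Fin n → α} {l : List α}
    (h : l.Perm (List.ofFn m)) : ∃ σ : Equiv.Perm (Fin n), List.ofFn (m ∘ σ) = l := by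
  rw [List.ofFn_eq_map] at h
  obtain ⟨l', hp, rfl⟩ := exists_map_eq_of_perm_map h
  obtain ⟨σ, rfl⟩ := exists_ofFn_perm_eq hp
  exact ⟨σ, List.map_ofFn.symm⟩

variable [LinearOrder α]

lemma cons_append_lt_append_cons {x y : α} {p : List α} (q q' : List α)
    (hp : ∀ z ∈ p, x ≤ z) (hxy : x < y) : x :: (p ++ q) < p ++ y :: q' := by
  induction p with
  | nil => exact List.cons_lt_cons_iff.2 (.inl hxy)
  | cons z p ih =>
    rcases (hp z List.mem_cons_self).lt_or_eq with h | rfl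
    · exact List.cons_lt_cons_iff.2 (.inl h)
    · exact List.cons_lt_cons_iff.2 (.inr ⟨rfl, ih fun y hy => hp y (List.mem_cons_of_mem x hy)⟩)

lemma sortedLE_map_of_forall_adjacent {k : ι → α} {l : List ι}
    (h : ∀ p u w q, l = p ++ u :: w :: q → k u ≤ k w) : (l.map k).SortedLE := by
  rw [List.sortedLE_iff_isChain, List.isChain_map,
    List.isChain_iff_forall_rel_of_append_cons_cons]
  exact fun u w p q => h p u w q

end Lists

lemma exists_forall_lt_iff_of_antitone {n : ℕ} {P : Fin n → Prop} (hP : Antitone P) :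
    ∃ s ≤ n, ∀ i : Fin n, i.val < s ↔ P i := by
  classical
  have hex : ∃ k, ∀ i : Fin n, k ≤ i.val → ¬ P i := ⟨n, fun i hi => absurd hi i.2.not_ge⟩
  refine ⟨Nat.find hex, Nat.find_min' hex fun i hi => absurd hi i.2.not_ge, fun i => ⟨?_, ?_⟩⟩
  · intro hi
    have hmin := Nat.find_min hex hi
    push Not at hmin
    obtain ⟨j, hij, hj⟩ := hmin
    exact hP hij hj
  · intro hi
    by_contra! hle
    exact Nat.find_spec hex i hle hi

lemma exists_cuts_of_monotone {n : ℕ} {z : Fin n → Fin 3} (hz : Monotone z) :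
    ∃ s t : ℕ, s ≤ t ∧ t ≤ n ∧ (∀ i : Fin n, i.val < s → z i = 0) ∧
      (∀ i : Fin n, s ≤ i.val → i.val < t → z i = 1) ∧ (∀ i : Fin n, t ≤ i.val → z i = 2) := by
  obtain ⟨s, hsn, hs⟩ := exists_forall_lt_iff_of_antitone (P := fun i => z i < 1)
    fun i j hij => (hz hij).trans_lt
  obtain ⟨t, htn, ht⟩ := exists_forall_lt_iff_of_antitone (P := fun i => z i < 2)
    fun i j hij => (hz hij).trans_lt
  refine ⟨s, t, ?_, htn, fun i hi => ?_, fun i hsi hti => ?_, fun i hi => ?_⟩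
  · by_contra! hlt
    exact (ht ⟨t, hlt.trans_le hsn⟩).not.1 (lt_irrefl t) (((hs ⟨t, _⟩).1 hlt).trans (by decide))
  · exact Fin.lt_one_iff _ |>.1 ((hs i).1 hi)
  · have h1 := (hs i).not.1 hsi.not_gt
    have h2 := (ht i).1 hti
    omega
  · have h2 := (ht i).not.1 hi.not_gt
    omega

/-- An increasing affine map `x ↦ slope * x + intercept`. Under composition these maps form a
group, so that the composition of a sequence of maps is the product of a list. -/
@[ext]
structure IncAffine (K : Type*) [Field K] [LinearOrder K] where
  slope : K
  intercept : K
  slope_pos : 0 < slope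

namespace IncAffine

section Field

variable {K : Type*} [Field K] [LinearOrder K]

/-- The cross product of the plane vectors `(1 - slope, intercept)` attached to `f` and `g`,
positive if `g` is counterclockwise of `f`. It equals `(f * g).intercept - (g * f).intercept`. -/
def cross (f g : IncAffine K) : K :=
  (1 - f.slope) * g.intercept - f.intercept * (1 - g.slope)

lemma fixedPoint_sub_fixedPoint {f g : IncAffine K} (hf : f.slope ≠ 1) (hg : g.slope ≠ 1) :
    g.intercept / (1 - g.slope) - f.intercept / (1 - f.slope) =
      cross f g / ((1 - f.slope) * (1 - g.slope)) := by
  have hf' : 1 - f.slope ≠ 0 := sub_ne_zero.2 hf.symm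
  have hg' : 1 - g.slope ≠ 0 := sub_ne_zero.2 hg.symm
  rw [cross]
  field_simp

lemma cross_pluecker (u w t v : IncAffine K) :
    cross u w * cross v t - cross u v * cross w t + cross u t * cross w v = 0 := by
  simp only [cross]; ring

-- The Plücker relation with the translation `x ↦ x + 1`, whose vector is `(0, 1)`.
lemma cross_pluecker_vertical (u w v : IncAffine K) :
    (1 - u.slope) * cross w v - (1 - w.slope) * cross u v + (1 - v.slope) * cross u w = 0 := by
  simp only [cross]; ring

variable [IsStrictOrderedRing K]

instance : One (IncAffine K) := ⟨⟨1, 0, one_pos⟩⟩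

-- `f * g` applies `f` first, so that the head of a list is the map applied first.
instance : Mul (IncAffine K) :=
  ⟨fun f g => ⟨f.slope * g.slope, g.slope * f.intercept + g.intercept,
    mul_pos f.slope_pos g.slope_pos⟩⟩

instance : Inv (IncAffine K) :=
  ⟨fun f => ⟨f.slope⁻¹, -(f.slope⁻¹ * f.intercept), inv_pos.2 f.slope_pos⟩⟩

@[simp] lemma slope_one : (1 : IncAffine K).slope = 1 := rfl

@[simp] lemma intercept_one : (1 : IncAffine K).intercept = 0 := rfl

@[simp] lemma slope_mul (f g : IncAffine K) : (f * g).slope = f.slope * g.slope := rfl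

@[simp] lemma intercept_mul (f g : IncAffine K) :
    (f * g).intercept = g.slope * f.intercept + g.intercept := rfl

@[simp] lemma slope_inv (f : IncAffine K) : f⁻¹.slope = f.slope⁻¹ := rfl

@[simp] lemma intercept_inv (f : IncAffine K) :
    f⁻¹.intercept = -(f.slope⁻¹ * f.intercept) := rfl

instance : Group (IncAffine K) :=
  Group.ofLeftAxioms
    (fun f g h => by ext <;> simp <;> ring)
    (fun f => by ext <;> simp)
    (fun f => by ext <;> simp [f.slope_pos.ne'])

/-- The slope as a homomorphism, which turns products of lists into products of slopes. -/
def slopeHom : IncAffine K →* K where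
  toFun := slope
  map_one' := slope_one
  map_mul' := slope_mul

lemma slope_prod (l : List (IncAffine K)) : l.prod.slope = (l.map slope).prod :=
  map_list_prod slopeHom l

lemma slope_prod_eq_of_perm {l l' : List (IncAffine K)} (h : l.Perm l') :
    l.prod.slope = l'.prod.slope := by
  rw [slope_prod, slope_prod, (h.map slope).prod_eq]

lemma foldl_eq_prod (l : List (IncAffine K)) (x : K) :
    l.foldl (fun x f => f.slope * x + f.intercept) x = l.prod.slope * x + l.prod.intercept := by
  induction l generalizing x with
  | nil => simp
  | cons f l ih =>
    simp only [List.foldl_cons, List.prod_cons, slope_mul, intercept_mul, ih]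
    ring

lemma cross_self_mul (f g : IncAffine K) : cross f (f * g) = cross f g := by
  simp only [cross, slope_mul, intercept_mul]; ring

lemma cross_mul_self (f g : IncAffine K) : cross (f * g) g = g.slope * cross f g := by
  simp only [cross, slope_mul, intercept_mul]; ring

lemma intercept_swap (p s t q : IncAffine K) :
    (p * s * t * q).intercept = (p * t * s * q).intercept + q.slope * cross s t := by
  simp only [cross, intercept_mul]; ring

lemma cross_nonpos_of_cross_pos {u w v : IncAffine K} (hu : 1 ≤ u.slope) (hw : w.slope < 1)
    (hv : 1 ≤ v.slope) (huw : 0 < cross u w) (hwv : 0 < cross w v) : cross u v ≤ 0 := by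
  have h1 : (1 - u.slope) * cross w v ≤ 0 :=
    mul_nonpos_of_nonpos_of_nonneg (sub_nonpos.2 hu) hwv.le
  have h2 : (1 - v.slope) * cross u w ≤ 0 :=
    mul_nonpos_of_nonpos_of_nonneg (sub_nonpos.2 hv) huw.le
  have h3 : (1 - w.slope) * cross u v ≤ 0 := by linarith [cross_pluecker_vertical u w v]
  exact nonpos_of_mul_nonpos_right h3 (sub_pos.2 hw)

lemma slope_eq_one_of_cross_nonpos {u w v : IncAffine K} (hu : u.slope < 1) (hw : 1 ≤ w.slope)
    (hv : 1 ≤ v.slope) (huw : 0 < cross u w) (huv : cross u v ≤ 0) (hwv : cross w v ≤ 0) :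
    v.slope = 1 ∧ cross w v = 0 := by
  have h1 : (1 - u.slope) * cross w v ≤ 0 := mul_nonpos_of_nonneg_of_nonpos (sub_pos.2 hu).le hwv
  have h2 : 0 ≤ (1 - w.slope) * cross u v := mul_nonneg_of_nonpos_of_nonpos (sub_nonpos.2 hw) huv
  have h3 : (1 - v.slope) * cross u w ≤ 0 :=
    mul_nonpos_of_nonpos_of_nonneg (sub_nonpos.2 hv) huw.le
  have h4 := cross_pluecker_vertical u w v
  constructor
  · have : (1 - v.slope) * cross u w = 0 := by linarith
    linarith [(mul_eq_zero.1 this).resolve_right huw.ne']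
  · have : (1 - u.slope) * cross w v = 0 := by linarith
    exact (mul_eq_zero.1 this).resolve_left (sub_pos.2 hu).ne'

lemma vertical_of_cross_nonpos {u w v : IncAffine K} (hu : u.slope < 1) (hw : 1 ≤ w.slope)
    (hv : 1 ≤ v.slope) (hv1 : v ≠ 1) (huw : 0 < cross u w) (huv : cross u v ≤ 0)
    (hwv : cross w v ≤ 0) :
    (w.slope = 1 ∧ 0 < w.intercept) ∧ v.slope = 1 ∧ v.intercept < 0 := by
  obtain ⟨hv_slope, hwv⟩ := slope_eq_one_of_cross_nonpos hu hw hv huw huv hwv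
  simp only [cross, hv_slope, sub_self, mul_zero, sub_zero] at huv hwv
  have hv_int : v.intercept < 0 :=
    (nonpos_of_mul_nonpos_right huv (sub_pos.2 hu)).lt_of_ne
      fun hb => hv1 (IncAffine.ext hv_slope hb)
  have hw_slope : w.slope = 1 :=
    (sub_eq_zero.1 ((mul_eq_zero.1 hwv).resolve_right hv_int.ne)).symm
  simp only [cross, hw_slope, sub_self, mul_zero, sub_zero] at huw
  exact ⟨⟨hw_slope, pos_of_mul_pos_right huw (sub_pos.2 hu).le⟩, hv_slope, hv_int⟩

/-- `l` maximizes the composition among its rearrangements. As all of them have the same slope,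
it does so at every starting point or at none, and comparing intercepts suffices. -/
def IsOptimal (l : List (IncAffine K)) : Prop :=
  ∀ l' : List (IncAffine K), l'.Perm l → l'.prod.intercept ≤ l.prod.intercept

lemma IsOptimal.of_prod_eq {l l' : List (IncAffine K)} (h : IsOptimal l) (hp : l'.Perm l)
    (he : l'.prod = l.prod) : IsOptimal l' :=
  fun m hm => he ▸ h m (hm.trans hp)

lemma IsOptimal.prod_eq {l l' : List (IncAffine K)} (h : IsOptimal l) (h' : IsOptimal l')
    (hp : l'.Perm l) : l'.prod = l.prod :=
  IncAffine.ext (slope_prod_eq_of_perm hp) (le_antisymm (h _ hp) (h' _ hp.symm))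

lemma IsOptimal.of_append_singleton {l : List (IncAffine K)} {m : IncAffine K}
    (h : IsOptimal (l ++ [m])) : IsOptimal l := by
  intro l' hp
  have hle := h _ (hp.append_right [m])
  simp only [List.prod_append, List.prod_singleton, intercept_mul, add_le_add_iff_right] at hle
  exact le_of_mul_le_mul_left hle m.slope_pos

lemma IsOptimal.cross_nonneg {P S T Q : List (IncAffine K)} (h : IsOptimal (P ++ S ++ T ++ Q)) :
    0 ≤ cross S.prod T.prod := by
  have hle := h _ (append_swap_perm P S T Q)
  simp only [List.prod_append] at hle
  rw [intercept_swap P.prod S.prod] at hle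
  exact nonneg_of_mul_nonneg_right (by linarith) Q.prod.slope_pos

lemma IsOptimal.swap {P S T Q : List (IncAffine K)} (h : IsOptimal (P ++ S ++ T ++ Q))
    (h0 : cross S.prod T.prod = 0) : IsOptimal (P ++ T ++ S ++ Q) := by
  have hp := append_swap_perm P S T Q
  refine h.of_prod_eq hp (IncAffine.ext (slope_prod_eq_of_perm hp) ?_)
  simp only [List.prod_append]
  rw [intercept_swap P.prod S.prod, h0, mul_zero, add_zero]

lemma IsOptimal.cross_append_nonneg {S T : List (IncAffine K)} (h : IsOptimal (S ++ T)) :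
    0 ≤ cross S.prod T.prod :=
  IsOptimal.cross_nonneg (P := []) (Q := []) (by simpa using h)

lemma IsOptimal.cross_prefix_nonneg {S T : List (IncAffine K)} (h : IsOptimal (S ++ T)) :
    0 ≤ cross S.prod (S ++ T).prod := by
  rw [List.prod_append, cross_self_mul]
  exact h.cross_append_nonneg

lemma IsOptimal.cross_suffix_nonneg {S T : List (IncAffine K)} (h : IsOptimal (S ++ T)) :
    0 ≤ cross (S ++ T).prod T.prod := by
  rw [List.prod_append, cross_mul_self]
  exact mul_nonneg T.prod.slope_pos.le h.cross_append_nonneg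

section LexLeast

variable {α : Type*} [LinearOrder α] {k : IncAffine K → α} {l : List (IncAffine K)}

/-- `l` is optimal, and its list of keys is lexicographically least among those of the optimal
rearrangements. This tie-break rules out value-preserving exchanges that lower the keys. -/
def IsLexLeast (k : IncAffine K → α) (l : List (IncAffine K)) : Prop :=
  IsOptimal l ∧ ∀ l' : List (IncAffine K), l'.Perm l → IsOptimal l' → l.map k ≤ l'.map k

lemma exists_isLexLeast (k : IncAffine K → α) (l₀ : List (IncAffine K)) :
    ∃ l : List (IncAffine K), l.Perm l₀ ∧ IsLexLeast k l := by
  have hfin : {l : List (IncAffine K) | l.Perm l₀}.Finite := by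
    simpa only [List.mem_permutations] using List.finite_toSet l₀.permutations
  obtain ⟨l, hl, hmin⟩ := Set.exists_min_image _
    (fun l => toLex (-l.prod.intercept, l.map k)) hfin ⟨l₀, List.Perm.refl l₀⟩
  have hle (l' : List (IncAffine K)) (hp : l'.Perm l) := Prod.Lex.toLex_le_toLex.1
    (hmin l' (hp.trans hl))
  refine ⟨l, hl, fun l' hp => ?_, fun l' hp ho => ?_⟩
  · rcases hle l' hp with h | h
    · exact (neg_lt_neg_iff.1 h).le
    · exact (neg_inj.1 h.1).ge
  · rcases hle l' hp with h | h
    · exact absurd (ho l hp.symm) (neg_lt_neg_iff.1 h).not_ge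
    · exact h.2

lemma exists_isOptimal (l₀ : List (IncAffine K)) :
    ∃ l : List (IncAffine K), l.Perm l₀ ∧ IsOptimal l := by
  obtain ⟨l, hp, hl⟩ := exists_isLexLeast slope l₀
  exact ⟨l, hp, hl.1⟩

lemma IsLexLeast.cross_pos {P S T Q : List (IncAffine K)} (h : IsLexLeast k l)
    (hl : l = P ++ S ++ T ++ Q) (hlt : (T ++ S ++ Q).map k < (S ++ T ++ Q).map k) :
    0 < cross S.prod T.prod := by
  subst hl
  refine h.1.cross_nonneg.lt_of_ne fun h0 => ?_
  refine (h.2 _ (append_swap_perm P S T Q) (h.1.swap h0.symm)).not_gt ?_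
  simpa only [List.append_assoc, List.map_append] using
    List.append_left_lt (l₁ := P.map k) (by simpa using hlt)

variable {p q : List (IncAffine K)} {u w : IncAffine K}

lemma IsLexLeast.cross_pos_of_inversion (h : IsLexLeast k l) (hl : l = p ++ u :: w :: q)
    (hk : k w < k u) : 0 < cross u w := by
  simpa using h.cross_pos (P := p) (S := [u]) (T := [w]) (Q := q) (by simpa using hl)
    (by simpa using List.cons_lt_cons_iff.2 (.inl hk))

lemma IsLexLeast.cross_tail_pos_of_inversion (h : IsLexLeast k l) (hl : l = p ++ u :: w :: q)
    (hk : k w < k u) : 0 < cross u (w :: q).prod := by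
  simpa using h.cross_pos (P := p) (S := [u]) (T := w :: q) (Q := []) (by simpa using hl)
    (by simpa using List.cons_lt_cons_iff.2 (.inl hk))

lemma IsLexLeast.cross_init_pos_of_inversion (h : IsLexLeast k l) (hl : l = p ++ u :: w :: q)
    (hk : k w < k u) (hp : ∀ f ∈ p, k w ≤ k f) : 0 < cross (p ++ [u]).prod w := by
  have hlt : ([w] ++ (p ++ [u]) ++ q).map k < ((p ++ [u]) ++ [w] ++ q).map k := by
    simpa using cons_append_lt_append_cons (k u :: q.map k) (k w :: q.map k)
      (List.forall_mem_map.2 hp) hk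
  simpa using h.cross_pos (P := []) (by simpa using hl) hlt

-- All terms of the Plücker relation between `u`, `w`, the tail from `w` on and the whole
-- composition would be nonnegative, and the last one positive.
lemma IsLexLeast.cross_prod_nonpos_of_inversion (h : IsLexLeast k l)
    (hl : l = p ++ u :: w :: q) (hk : k w < k u) (hu : cross u l.prod ≤ 0) :
    cross w l.prod ≤ 0 := by
  set t := (w :: q).prod with ht
  have huw := h.cross_pos_of_inversion hl hk
  have hut : 0 < cross u t := h.cross_tail_pos_of_inversion hl hk
  have hwt : 0 ≤ cross w t := by
    have : 0 ≤ cross [w].prod q.prod :=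
      IsOptimal.cross_nonneg (P := p ++ [u]) (Q := []) (by simpa [hl] using h.1)
    simpa [ht, cross_self_mul] using this
  have hlt : 0 ≤ cross l.prod t := by
    have hsplit : l = (p ++ [u]) ++ (w :: q) := by simp [hl]
    simpa only [hsplit] using (hsplit ▸ h.1).cross_suffix_nonneg
  have hrel := cross_pluecker u w t l.prod
  have h1 := mul_nonneg huw.le hlt
  have h2 := mul_nonpos_of_nonpos_of_nonneg hu hwt
  exact nonpos_of_mul_nonpos_right (by linarith) hut

end LexLeast

end Field

/-- The fixed point `γ` of `x ↦ slope * x + intercept`, with the conventions of `gam`. -/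
noncomputable def gamma (f : IncAffine ℝ) : EReal := gam f.slope f.intercept

variable {f g : IncAffine ℝ}

lemma gamma_of_slope_ne_one (h : f.slope ≠ 1) :
    gamma f = ((f.intercept / (1 - f.slope) : ℝ) : EReal) := by
  rw [gamma, gam, if_neg h]

lemma gamma_of_intercept_neg (h : f.slope = 1) (hb : f.intercept < 0) : gamma f = ⊤ := by
  rw [gamma, gam, if_pos h, if_pos hb]

lemma gamma_of_intercept_nonneg (h : f.slope = 1) (hb : 0 ≤ f.intercept) : gamma f = ⊥ := by
  rw [gamma, gam, if_pos h, if_neg hb.not_gt]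

lemma gamma_inv (h : f.slope ≠ 1) : gamma f⁻¹ = gamma f := by
  have hpos := f.slope_pos.ne'
  have hne : 1 - f.slope ≠ 0 := sub_ne_zero.2 h.symm
  rw [gamma_of_slope_ne_one h, gamma_of_slope_ne_one (by simpa using h), slope_inv, intercept_inv]
  congr 1
  field_simp
  ring

lemma gamma_le_gamma_of_cross_pos (hside : f.slope < 1 ↔ g.slope < 1) (h : 0 < cross f g) :
    gamma f ≤ gamma g := by
  by_cases hf : f.slope = 1
  · have hb : 0 ≤ f.intercept := by
      have hg : 1 ≤ g.slope := not_lt.1 (hside.not.1 hf.not_lt)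
      simp only [cross, hf, sub_self, zero_mul, zero_sub, neg_pos] at h
      exact (pos_of_mul_neg_left h (sub_nonpos.2 hg)).le
    exact gamma_of_intercept_nonneg hf hb ▸ bot_le
  by_cases hg : g.slope = 1
  · have hb : g.intercept < 0 := by
      have hf : 1 ≤ f.slope := not_lt.1 (hside.not.2 hg.not_lt)
      simp only [cross, hg, sub_self, mul_zero, sub_zero] at h
      exact neg_of_mul_pos_right h (sub_nonpos.2 hf)
    exact gamma_of_intercept_neg hg hb ▸ le_top
  have hpos : 0 < (1 - f.slope) * (1 - g.slope) := by
    by_cases hf1 : f.slope < 1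
    · exact mul_pos (sub_pos.2 hf1) (sub_pos.2 (hside.1 hf1))
    · exact mul_pos_of_neg_of_neg (sub_neg.2 (lt_of_le_of_ne (not_lt.1 hf1) (Ne.symm hf)))
        (sub_neg.2 (lt_of_le_of_ne (not_lt.1 (hside.not.1 hf1)) (Ne.symm hg)))
  rw [gamma_of_slope_ne_one hf, gamma_of_slope_ne_one hg, EReal.coe_le_coe_iff, ← sub_nonneg,
    fixedPoint_sub_fixedPoint hf hg]
  exact (div_pos h hpos).le

lemma gamma_le_gamma_iff (hf : f.slope < 1) (hg : 1 ≤ g.slope) (hg1 : g ≠ 1) :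
    gamma f ≤ gamma g ↔ cross f g ≤ 0 := by
  have hf' : 0 < 1 - f.slope := sub_pos.2 hf
  rcases hg.eq_or_lt' with hg | hg
  · have hcross : cross f g = (1 - f.slope) * g.intercept := by simp [cross, hg]
    rw [hcross, mul_nonpos_iff_pos_imp_nonpos, gamma_of_slope_ne_one hf.ne]
    have hb : g.intercept ≠ 0 := fun hb => hg1 (IncAffine.ext hg hb)
    rcases hb.lt_or_gt with hb | hb
    · simp [gamma_of_intercept_neg hg hb, hb.le, hf'.le]
    · simp [gamma_of_intercept_nonneg hg hb.le, hb, hf]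
  · have hneg : (1 - f.slope) * (1 - g.slope) < 0 := mul_neg_of_pos_of_neg hf' (sub_neg.2 hg)
    rw [gamma_of_slope_ne_one hf.ne, gamma_of_slope_ne_one hg.ne', EReal.coe_le_coe_iff,
      ← sub_nonneg, fixedPoint_sub_fixedPoint hf.ne hg.ne', div_nonneg_iff]
    constructor
    · rintro (h | h)
      · exact absurd h.2 hneg.not_ge
      · exact h.1
    · exact fun h => .inr ⟨h, hneg.le⟩

/-- The block of positions to which a cut `c` assigns `f`: first the contracting maps with
`γ > c`, then the maps of slope at least `1`, and last the contracting maps with `γ ≤ c`. -/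
noncomputable def block (c : EReal) (f : IncAffine ℝ) : Fin 3 :=
  if 1 ≤ f.slope then 1 else if gamma f ≤ c then 2 else 0

/-- The sorting key of `f` for a cut `c`: maps are ordered by block, then by `γ`. -/
noncomputable def key (c : EReal) (f : IncAffine ℝ) : Fin 3 ×ₗ EReal :=
  toLex (block c f, gamma f)

variable {c : EReal}

lemma block_eq_zero_iff : block c f = 0 ↔ f.slope < 1 ∧ c < gamma f := by
  unfold block; split_ifs <;> simp_all

lemma block_eq_one_iff : block c f = 1 ↔ 1 ≤ f.slope := by
  unfold block; split_ifs <;> simp_all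

lemma block_eq_two_iff : block c f = 2 ↔ f.slope < 1 ∧ gamma f ≤ c := by
  unfold block; split_ifs <;> simp_all

lemma block_le_of_key_le (h : key c f ≤ key c g) : block c f ≤ block c g :=
  Prod.Lex.monotone_fst_ofLex h

lemma key_le_of_block_lt (h : block c f < block c g) : key c f ≤ key c g :=
  Prod.Lex.toLex_le_toLex.2 (.inl h)

lemma key_le_iff_of_block_eq (h : block c f = block c g) :
    key c f ≤ key c g ↔ gamma f ≤ gamma g := by
  simp [key, Prod.Lex.toLex_le_toLex, h]

lemma key_le_of_gamma_eq_cut (hg : g.slope < 1) (hc : gamma g = c) : key c f ≤ key c g := by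
  have hg2 : block c g = 2 := block_eq_two_iff.2 ⟨hg, hc.le⟩
  rcases (Fin.le_last (block c f)).lt_or_eq with h | h
  · exact key_le_of_block_lt (hg2 ▸ h)
  · refine (key_le_iff_of_block_eq (h.trans hg2.symm)).2 ?_
    exact (block_eq_two_iff.1 h).2.trans hc.ge

lemma key_top_le_of_gamma_eq_bot (hf : 1 ≤ f.slope) (hb : gamma f = ⊥) : key ⊤ f ≤ key ⊤ g := by
  have hf1 : block ⊤ f = 1 := block_eq_one_iff.2 hf
  by_cases hg : 1 ≤ g.slope
  · exact (key_le_iff_of_block_eq (hf1.trans (block_eq_one_iff.2 hg).symm)).2 (hb ▸ bot_le)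
  · have hg2 : block ⊤ g = 2 := block_eq_two_iff.2 ⟨not_le.1 hg, le_top⟩
    exact key_le_of_block_lt (by rw [hf1, hg2]; decide)

section Inversion

variable {l p q : List (IncAffine ℝ)} {u w : IncAffine ℝ}

lemma IsLexLeast.key_le_of_one_le_slope (h : IsLexLeast (key c) l) (hl : l = p ++ u :: w :: q)
    (hu : 1 ≤ u.slope) (hw : 1 ≤ w.slope) : key c u ≤ key c w := by
  by_contra! hk
  have hblock : block c u = block c w :=
    (block_eq_one_iff.2 hu).trans (block_eq_one_iff.2 hw).symm
  refine hk.not_ge ((key_le_iff_of_block_eq hblock).2 (gamma_le_gamma_of_cross_pos ?_ ?_))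
  · exact iff_of_false hu.not_gt hw.not_gt
  · exact h.cross_pos_of_inversion hl hk

lemma IsLexLeast.key_le_of_slope_lt_one (h : IsLexLeast (key (gamma l.prod)) l)
    (hl1 : 1 ≤ l.prod.slope) (hne : l.prod ≠ 1) (hl : l = p ++ u :: w :: q)
    (hu : u.slope < 1) (hw : w.slope < 1) :
    key (gamma l.prod) u ≤ key (gamma l.prod) w := by
  by_contra! hk
  have hγ : gamma u ≤ gamma w := gamma_le_gamma_of_cross_pos (iff_of_true hu hw)
    (h.cross_pos_of_inversion hl hk)
  have hcut (h' : gamma u ≤ gamma l.prod) : gamma w ≤ gamma l.prod := by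
    rw [gamma_le_gamma_iff hu hl1 hne] at h'
    exact (gamma_le_gamma_iff hw hl1 hne).2 (h.cross_prod_nonpos_of_inversion hl hk h')
  have hblock : block (gamma l.prod) u = block (gamma l.prod) w := by
    have : gamma u ≤ gamma l.prod ↔ gamma w ≤ gamma l.prod := ⟨hcut, hγ.trans⟩
    simp only [block, hu.not_ge, hw.not_ge, this]
  exact hk.not_ge ((key_le_iff_of_block_eq hblock).2 hγ)

lemma IsLexLeast.key_le_of_one_le_slope_of_slope_lt_one
    (h : IsLexLeast (key (gamma l.prod)) l) (hl1 : 1 ≤ l.prod.slope) (hne : l.prod ≠ 1)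
    (hl : l = p ++ u :: w :: q) (hu : 1 ≤ u.slope) (hw : w.slope < 1) :
    key (gamma l.prod) u ≤ key (gamma l.prod) w := by
  by_contra! hk
  have hwl : 0 < cross w l.prod := by
    rw [← not_le, ← gamma_le_gamma_iff hw hl1 hne]
    intro hγ
    refine hk.not_ge (key_le_of_block_lt ?_)
    rw [block_eq_one_iff.2 hu, block_eq_two_iff.2 ⟨hw, hγ⟩]
    decide
  have hul : cross u l.prod ≤ 0 :=
    cross_nonpos_of_cross_pos hu hw hl1 (h.cross_pos_of_inversion hl hk) hwl
  exact hwl.not_ge (h.cross_prod_nonpos_of_inversion hl hk hul)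

-- The only obstruction is that the cut is vertical and `w` points along it; such a `w` could be
-- moved to the very front.
lemma IsLexLeast.key_le_of_slope_lt_one_of_one_le_slope
    (h : IsLexLeast (key (gamma l.prod)) l) (hl1 : 1 ≤ l.prod.slope) (hne : l.prod ≠ 1)
    (hl : l = p ++ u :: w :: q) (hu : u.slope < 1) (hw : 1 ≤ w.slope) :
    key (gamma l.prod) u ≤ key (gamma l.prod) w := by
  by_contra! hk
  have hul : cross u l.prod ≤ 0 := by
    rw [← gamma_le_gamma_iff hu hl1 hne, ← not_lt]
    intro hγ
    refine hk.not_ge (key_le_of_block_lt ?_)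
    rw [block_eq_zero_iff.2 ⟨hu, hγ⟩, block_eq_one_iff.2 hw]
    decide
  obtain ⟨⟨hw_slope, hw_int⟩, hl_slope, hl_int⟩ := vertical_of_cross_nonpos hu hw hl1 hne
    (h.cross_pos_of_inversion hl hk) hul (h.cross_prod_nonpos_of_inversion hl hk hul)
  have hfirst (f : IncAffine ℝ) : key (gamma l.prod) w ≤ key (gamma l.prod) f := by
    rw [gamma_of_intercept_neg hl_slope hl_int]
    exact key_top_le_of_gamma_eq_bot hw (gamma_of_intercept_nonneg hw_slope hw_int.le)
  have hinit : 0 < 1 - (p ++ [u]).prod.slope := by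
    have := h.cross_init_pos_of_inversion hl hk fun f _ => hfirst f
    simp only [cross, hw_slope, sub_self, mul_zero, sub_zero] at this
    exact pos_of_mul_pos_left this hw_int.le
  have hinit_l : 0 ≤ (1 - (p ++ [u]).prod.slope) * l.prod.intercept := by
    have hsplit : l = (p ++ [u]) ++ (w :: q) := by simp [hl]
    have : 0 ≤ cross (p ++ [u]).prod l.prod := by
      simpa only [hsplit] using (hsplit ▸ h.1).cross_prefix_nonneg
    simpa only [cross, hl_slope, sub_self, mul_zero, sub_zero] using this
  exact (mul_neg_of_pos_of_neg hinit hl_int).not_ge hinit_l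

theorem IsLexLeast.sortedLE (h : IsLexLeast (key (gamma l.prod)) l) (hl1 : 1 ≤ l.prod.slope)
    (hne : l.prod ≠ 1) : (l.map (key (gamma l.prod))).SortedLE := by
  refine sortedLE_map_of_forall_adjacent fun p u w q hl => ?_
  rcases lt_or_ge u.slope 1 with hu | hu <;> rcases lt_or_ge w.slope 1 with hw | hw
  · exact h.key_le_of_slope_lt_one hl1 hne hl hu hw
  · exact h.key_le_of_slope_lt_one_of_one_le_slope hl1 hne hl hu hw
  · exact h.key_le_of_one_le_slope_of_slope_lt_one hl1 hne hl hu hw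
  · exact h.key_le_of_one_le_slope hl hu hw

end Inversion

variable {l₀ : List (IncAffine ℝ)}

lemma IsOptimal.exists_sortedLE_of_prod_ne_one (h : IsOptimal l₀) (h1 : 1 ≤ l₀.prod.slope)
    (hne : l₀.prod ≠ 1) :
    ∃ l : List (IncAffine ℝ), l.Perm l₀ ∧ IsOptimal l ∧
      (l.map (key (gamma l₀.prod))).SortedLE := by
  obtain ⟨l, hp, hl⟩ := exists_isLexLeast (key (gamma l₀.prod)) l₀
  have hprod : l.prod = l₀.prod := h.prod_eq hl.1 hp
  rw [← hprod] at hl h1 hne ⊢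
  exact ⟨l, hp, hl.1, hl.sortedLE h1 hne⟩

lemma exists_sortedLE_of_one_le_slope (c : EReal) (h1 : ∀ f ∈ l₀, 1 ≤ f.slope) :
    ∃ l : List (IncAffine ℝ), l.Perm l₀ ∧ IsOptimal l ∧ (l.map (key c)).SortedLE := by
  obtain ⟨l, hp, hl⟩ := exists_isLexLeast (key c) l₀
  refine ⟨l, hp, hl.1, sortedLE_map_of_forall_adjacent fun p u w q he => ?_⟩
  have hmem (f : IncAffine ℝ) (hf : f ∈ u :: w :: q) : 1 ≤ f.slope :=
    h1 f (hp.subset (he ▸ List.mem_append_right p hf))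
  exact hl.key_le_of_one_le_slope he (hmem u (by simp)) (hmem w (by simp))

lemma IsOptimal.exists_sortedLE_of_prod_eq_one (h : IsOptimal l₀) (h1 : l₀.prod = 1)
    {m : IncAffine ℝ} (hm : m ∈ l₀) (hm1 : m.slope < 1) :
    ∃ l : List (IncAffine ℝ), l.Perm l₀ ∧ IsOptimal l ∧ (l.map (key (gamma m))).SortedLE := by
  obtain ⟨P, Q, rfl⟩ := List.append_of_mem hm
  have hrot : (Q ++ P ++ [m]).Perm (P ++ m :: Q) := by
    simpa using List.perm_append_comm (l₁ := Q) (l₂ := P ++ [m])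
  have hrot1 : (Q ++ P ++ [m]).prod = 1 := by
    have : (P ++ [m]).prod * Q.prod = 1 := by simpa [mul_assoc] using h1
    simpa [mul_assoc] using mul_eq_one_comm.1 this
  have hopt : IsOptimal (Q ++ P ++ [m]) := h.of_prod_eq hrot (hrot1.trans h1.symm)
  have hrest : (Q ++ P).prod = m⁻¹ := by
    rw [List.prod_append, List.prod_singleton] at hrot1
    exact eq_inv_of_mul_eq_one_left hrot1
  have hrest1 : 1 < (Q ++ P).prod.slope := by
    rw [hrest]; exact (one_lt_inv₀ m.slope_pos).2 hm1
  obtain ⟨l, hp, hl, hsort⟩ := hopt.of_append_singleton.exists_sortedLE_of_prod_ne_one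
    hrest1.le fun he => hrest1.ne' (by rw [he, slope_one])
  rw [hrest, gamma_inv hm1.ne] at hsort
  refine ⟨l ++ [m], (hp.append_right [m]).trans hrot, ?_, ?_⟩
  · refine hopt.of_prod_eq (hp.append_right [m]) ?_
    rw [List.prod_append, List.prod_append, hopt.of_append_singleton.prod_eq hl hp]
  · rw [List.sortedLE_iff_pairwise, List.map_append, List.map_singleton, List.pairwise_append]
    refine ⟨hsort.pairwise, List.pairwise_singleton _ _, ?_⟩
    simp only [List.mem_map, List.mem_singleton]
    rintro _ ⟨f, -, rfl⟩ _ rfl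
    exact key_le_of_gamma_eq_cut hm1 rfl

theorem exists_isOptimal_sortedLE (h1 : 1 ≤ l₀.prod.slope) :
    ∃ (l : List (IncAffine ℝ)) (c : EReal), l.Perm l₀ ∧ IsOptimal l ∧
      (l.map (key c)).SortedLE := by
  by_cases hm : ∀ f ∈ l₀, 1 ≤ f.slope
  · obtain ⟨l, hl⟩ := exists_sortedLE_of_one_le_slope ⊥ hm
    exact ⟨l, ⊥, hl⟩
  push Not at hm
  obtain ⟨m, hm, hm1⟩ := hm
  obtain ⟨l', hp', hopt⟩ := exists_isOptimal l₀
  rw [← slope_prod_eq_of_perm hp'] at h1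
  by_cases hne : l'.prod = 1
  · obtain ⟨l, hp, hl⟩ := hopt.exists_sortedLE_of_prod_eq_one hne (hp'.mem_iff.2 hm) hm1
    exact ⟨l, gamma m, hp.trans hp', hl⟩
  · obtain ⟨l, hp, hl⟩ := hopt.exists_sortedLE_of_prod_ne_one h1 hne
    exact ⟨l, gamma l'.prod, hp.trans hp', hl⟩

section Perm

variable {n : ℕ} {m : Fin n → IncAffine ℝ}

theorem exists_perm_isOptimal_monotone_key (h1 : 1 ≤ ∏ i, (m i).slope) :
    ∃ (σ : Equiv.Perm (Fin n)) (c : EReal), IsOptimal (List.ofFn (m ∘ σ)) ∧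
      Monotone fun i => key c (m (σ i)) := by
  have hslope : 1 ≤ (List.ofFn m).prod.slope := by
    rwa [slope_prod, List.map_ofFn, List.prod_ofFn]
  obtain ⟨l, c, hp, hopt, hsort⟩ := exists_isOptimal_sortedLE hslope
  obtain ⟨σ, rfl⟩ := exists_ofFn_comp_perm_eq hp
  rw [List.map_ofFn, List.sortedLE_ofFn_iff] at hsort
  exact ⟨σ, c, hopt, hsort⟩

lemma compSeq_eq_prod (m : Fin n → IncAffine ℝ) (σ : Fin n → Fin n) (x : ℝ) :
    compSeq (fun i x => (m i).slope * x + (m i).intercept) σ n x =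
      (List.ofFn (m ∘ σ)).prod.slope * x + (List.ofFn (m ∘ σ)).prod.intercept := by
  rw [← foldl_eq_prod, compSeq, List.take_of_length_le (by simp), List.ofFn_eq_map,
    ← List.map_map, List.foldl_map (f := m)]

lemma IsOptimal.compSeq_le {σ : Equiv.Perm (Fin n)} (h : IsOptimal (List.ofFn (m ∘ σ)))
    (τ : Equiv.Perm (Fin n)) (x : ℝ) :
    compSeq (fun i x => (m i).slope * x + (m i).intercept) τ n x ≤
      compSeq (fun i x => (m i).slope * x + (m i).intercept) σ n x := by
  have hp : (List.ofFn (m ∘ τ)).Perm (List.ofFn (m ∘ σ)) :=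
    (τ.ofFn_comp_perm m).trans (σ.ofFn_comp_perm m).symm
  rw [compSeq_eq_prod, compSeq_eq_prod, slope_prod_eq_of_perm hp]
  exact add_le_add_right (h _ hp) _

end Perm

end IncAffine

/-- If `∏ aᵢ ≥ 1`, there is an optimal permutation `σ` (0-indexed positions) and
`0 ≤ s ≤ t ≤ n` with `δ = -1` on positions `[0, s) ∪ [t, n)`, `δ = +1` on `[s, t)`,
`γ` nondecreasing along positions `t, …, n-1, 0, …, s-1`, and `γ` nondecreasing
along positions `s, …, t-1`. -/
theorem stmt16 (n : ℕ) (c : ℝ) (a b : Fin n → ℝ) (ha : ∀ i, 0 ≤ a i)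
    (hnid : ∀ i, (a i, b i) ≠ (1, 0)) (hprod : 1 ≤ ∏ i, a i) :
    ∃ (σ : Equiv.Perm (Fin n)) (s t : ℕ), s ≤ t ∧ t ≤ n ∧
      (∀ τ : Equiv.Perm (Fin n),
        compSeq (fun i x => a i * x + b i) τ n c ≤
          compSeq (fun i x => a i * x + b i) σ n c) ∧
      (∀ i : Fin n, i.val < s → del (a (σ i)) = -1) ∧
      (∀ i : Fin n, t ≤ i.val → del (a (σ i)) = -1) ∧
      (∀ i : Fin n, s ≤ i.val → i.val < t → del (a (σ i)) = 1) ∧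
      (∀ i j : Fin n, t ≤ i.val → i ≤ j →
        gam (a (σ i)) (b (σ i)) ≤ gam (a (σ j)) (b (σ j))) ∧
      (∀ i j : Fin n, i ≤ j → j.val < s →
        gam (a (σ i)) (b (σ i)) ≤ gam (a (σ j)) (b (σ j))) ∧
      (∀ i j : Fin n, t ≤ i.val → j.val < s →
        gam (a (σ i)) (b (σ i)) ≤ gam (a (σ j)) (b (σ j))) ∧
      (∀ i j : Fin n, s ≤ i.val → i ≤ j → j.val < t →
        gam (a (σ i)) (b (σ i)) ≤ gam (a (σ j)) (b (σ j))) := by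
  have hpos (i : Fin n) : 0 < a i := (ha i).lt_of_ne'
    (Finset.prod_ne_zero_iff.1 (zero_lt_one.trans_le hprod).ne' i (Finset.mem_univ i))
  let m (i : Fin n) : IncAffine ℝ := ⟨a i, b i, hpos i⟩
  obtain ⟨σ, g, hopt, hkey⟩ := IncAffine.exists_perm_isOptimal_monotone_key (m := m) hprod
  obtain ⟨s, t, hst, htn, hfirst, hmid, hlast⟩ := exists_cuts_of_monotone
    fun i j hij => IncAffine.block_le_of_key_le (hkey hij)
  have hfirst' (i : Fin n) (hi : i.val < s) := IncAffine.block_eq_zero_iff.1 (hfirst i hi)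
  have hlast' (i : Fin n) (hi : t ≤ i.val) := IncAffine.block_eq_two_iff.1 (hlast i hi)
  have hγ {i j : Fin n} (hij : i ≤ j)
      (hb : IncAffine.block g (m (σ i)) = IncAffine.block g (m (σ j))) :
      gam (a (σ i)) (b (σ i)) ≤ gam (a (σ j)) (b (σ j)) :=
    (IncAffine.key_le_iff_of_block_eq hb).1 (hkey hij)
  refine ⟨σ, s, t, hst, htn, fun τ => hopt.compSeq_le τ c, ?_, ?_, ?_, ?_, ?_, ?_, ?_⟩
  · exact fun i hi => if_neg (hfirst' i hi).1.not_ge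
  · exact fun i hi => if_neg (hlast' i hi).1.not_ge
  · exact fun i hi hi' => if_pos (IncAffine.block_eq_one_iff.1 (hmid i hi hi'))
  · exact fun i j hi hij => hγ hij ((hlast i hi).trans (hlast j (hi.trans hij)).symm)
  · exact fun i j hij hj =>
      hγ hij ((hfirst i (lt_of_le_of_lt hij hj)).trans (hfirst j hj).symm)
  · exact fun i j hi hj => (hlast' i hi).2.trans (hfirst' j hj).2.le
  · exact fun i j hi hij hj =>
      hγ hij ((hmid i hi (lt_of_le_of_lt hij hj)).trans (hmid j (hi.trans hij) hj).symm)
end
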